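/- arXiv:2210.02103 — 3 statements merged into one kernel-verified Lean document; each statement's English description precedes it below -/
import Mathlib

section
/- Let (k,′) be a differential field of characteristic zero, α, β ∈ kˣ, Q = (α,β)_k, ξ an element of an algebraic closure k̄ of k with ξ² = α, a₁, a₂, a₃ ∈ k, ϑ = a₁u + a₂v + a₃uv, and d = d_{(u,v)} + ∂_ϑ. Assume that the associated Riccati equation X′ = (a₂+a₃ξ)β + 2(a₁ξ + β′/(4β))X − (a₂−a₃ξ)X² has no solution in k̄, and that in every differential field extension of (k(ξ),′) any two distinct solutions of this Riccati equation are algebraically independent over k. Then every differential field extension of (k,′) that splits (Q,d) has transcendence degree at least 3 over k. -/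
open scoped TensorProduct

/-- A derivation on a (possibly noncommutative) ring: an additive map satisfying the
Leibniz rule. -/
structure IsRingDeriv {A : Type*} [Ring A] (d : A → A) : Prop where
  map_add : ∀ x y, d (x + y) = d x + d y
  leibniz : ∀ x y, d (x * y) = d x * y + x * d y

/-- The derivation `d` on the `k`-algebra `A` restricts to the derivation `δ` on `k`
(along `algebraMap k A`). -/
def RestrictsTo {k A : Type*} [CommRing k] [Ring A] [Algebra k A]
    (δ : k → k) (d : A → A) : Prop :=
  ∀ c : k, d (algebraMap k A c) = algebraMap k A (δ c)

/-- The differential algebra `(Q, d)` over `(k, δk)` is split by the differential field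
`(L, δL)`: there is an `L`-algebra isomorphism `L ⊗[k] Q ≃ M₂(L)` intertwining the
induced derivation `d* = δL ⊗ id + id ⊗ d` with the coordinate-wise derivation on `M₂(L)`. -/
def DiffSplits (k : Type*) [Field k] (Q : Type*) [Ring Q] [Algebra k Q]
    (d : Q → Q) (L : Type*) [Field L] [Algebra k L] (δL : L → L) : Prop :=
  ∃ D : L ⊗[k] Q → L ⊗[k] Q,
    IsRingDeriv D ∧
    (∀ (y : L) (x : Q), D (y ⊗ₜ[k] x) = δL y ⊗ₜ[k] x + y ⊗ₜ[k] d x) ∧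
    ∃ φ : (L ⊗[k] Q) ≃ₐ[L] Matrix (Fin 2) (Fin 2) L,
      ∀ z, φ (D z) = (φ z).map δL

/-- The transcendence degree of `L` over `k` is at least `n`: there are `n` algebraically
independent elements. -/
def TrdegGE (k L : Type*) [CommRing k] [CommRing L] [Algebra k L] (n : ℕ) : Prop :=
  ∃ f : Fin n → L, AlgebraicIndependent k f

/-- The transcendence degree of `L` over `k` is at most `n`: there is no algebraically
independent family of `n + 1` elements. -/
def TrdegLE (k L : Type*) [CommRing k] [CommRing L] [Algebra k L] (n : ℕ) : Prop :=
  ∀ f : Fin (n + 1) → L, ¬ AlgebraicIndependent k f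

universe u

section helpers
open Polynomial Differential
set_option linter.style.haveILetI false
set_option linter.unusedSectionVars false

/-- restrict a derivation to a stable intermediate field -/
noncomputable abbrev restrictDiff {F M : Type*} [Field F] [Field M] [Algebra F M] [Differential M]
    (S : IntermediateField F M) (h : ∀ x ∈ S, x′ ∈ S) : Differential S where
  deriv := Derivation.mk' (AddMonoidHom.toIntLinearMap
    { toFun := fun x => (⟨(x : M)′, h _ x.2⟩ : S)
      map_zero' := by ext; simp
      map_add' := fun x y => by ext; simp })
    (fun x y => by ext; simp)

lemma restrictDiff_alg {F M : Type*} [Field F] [Field M] [Algebra F M] [Differential M]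
    (S : IntermediateField F M) (h : ∀ x ∈ S, x′ ∈ S) :
    letI := restrictDiff S h
    DifferentialAlgebra S M := by
  letI := restrictDiff S h
  exact ⟨fun a => rfl⟩

section lemA
variable {E M : Type*} [Field E] [Field M] [Algebra E M] [Differential E] [Differential M]
  [DifferentialAlgebra E M] [CharZero E]

lemma natDegree_zero_of_dvd [IsAlgClosed E] (p : E[X]) (hno : ∀ r : E, r′ ≠ p.eval r)
    (f : E[X]) (hf : f ≠ 0) (hdvd : f ∣ implicitDeriv p f) : f.natDegree = 0 := by
  by_contra hd
  obtain ⟨r, hr⟩ := IsAlgClosed.exists_root f (by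
    intro h; exact hd (natDegree_eq_of_degree_eq_some h))
  obtain ⟨s, hs, hns⟩ := exists_eq_pow_rootMultiplicity_mul_and_not_dvd f hf r
  have hm : 0 < f.rootMultiplicity r := (rootMultiplicity_pos hf).2 hr
  obtain ⟨m, hm⟩ : ∃ m, f.rootMultiplicity r = m + 1 := ⟨_, (Nat.succ_pred_eq_of_pos hm).symm⟩
  rw [hm] at hs
  have hD : implicitDeriv p f = (X - C r) ^ m * (((m : E[X]) + 1) * (p - C r′) * s
      + (X - C r) * implicitDeriv p s) := by
    rw [hs, Derivation.leibniz, Derivation.leibniz_pow]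
    simp
    ring
  have h1 : (X - C r) ^ m * (X - C r) ∣ (X - C r) ^ m * (((m : E[X]) + 1) * (p - C r′) * s
      + (X - C r) * implicitDeriv p s) := by
    rw [← hD, ← pow_succ]
    exact (Dvd.intro _ hs.symm).trans hdvd
  have h2 := (mul_dvd_mul_iff_left (pow_ne_zero m (X_sub_C_ne_zero r))).1 h1
  have h3 : (X - C r) ∣ ((m : E[X]) + 1) * (p - C r′) * s :=
    (dvd_add_left (dvd_mul_right _ _)).1 h2
  rcases (prime_X_sub_C r).dvd_or_dvd h3 with h | h
  · rw [dvd_iff_isRoot] at h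
    simp only [IsRoot, eval_mul, eval_add, eval_natCast, eval_one, eval_sub, eval_C] at h
    rcases mul_eq_zero.1 h with h | h
    · exact (Nat.cast_add_one_ne_zero m) h
    · exact hno r (sub_eq_zero.1 h).symm
  · exact hns h

lemma deriv_adjoin_mem (t : M) (p : E[X]) (hp : t′ = aeval t p) :
    ∀ x ∈ IntermediateField.adjoin E {t}, x′ ∈ IntermediateField.adjoin E {t} := by
  intro x hx
  obtain ⟨r, s, rfl⟩ := (IntermediateField.mem_adjoin_simple_iff E _).1 hx
  rw [Derivation.leibniz_div, deriv_aeval_eq_implicitDeriv t p hp,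
    deriv_aeval_eq_implicitDeriv t p hp]
  have hmem : ∀ f : E[X], aeval t f ∈ IntermediateField.adjoin E {t} := fun f => by
    rw [IntermediateField.mem_adjoin_simple_iff]
    exact ⟨f, 1, by simp⟩
  simp only [smul_eq_mul]
  exact mul_mem (pow_mem (inv_mem (hmem s)) 2)
    (sub_mem (mul_mem (hmem _) (hmem _)) (mul_mem (hmem _) (hmem _)))

lemma expo_step1 {K M : Type*} [Field K] [Field M] [Algebra K M] [Differential K] [Differential M]
  [DifferentialAlgebra K M] (g : M) (hg0 : g ≠ 0) (hg : IsAlgebraic K g) (q : K)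
  (hq : g′ = algebraMap K M q * g) :
  ∃ (n : ℕ) (a : K), 0 < n ∧ a ≠ 0 ∧ a′ = n * q * a := by
  set P := minpoly K g with hP
  have hgint := hg.isIntegral
  have hmon : P.Monic := minpoly.monic hgint
  set n := P.natDegree with hn
  let P1 : K[X] := mapCoeffs P + C q * X * derivative P - C ((n : K) * q) * P
  have h1 : aeval g P1 = 0 := by
    have h := deriv_aeval_eq g P
    rw [minpoly.aeval] at h
    simp only [map_zero, hq] at h
    simp only [P1, map_sub, map_add, map_mul, aeval_C, aeval_X, P, minpoly.aeval]
    simp only [P] at h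
    linear_combination -h
  have hcoef : ∀ i, P1.coeff i = (P.coeff i)′ + i * q * P.coeff i - n * q * P.coeff i := by
    intro i
    simp only [P1, coeff_sub, coeff_add, coeff_mapCoeffs, coeff_C_mul, mul_assoc]
    rcases i with _ | i
    · simp
    · rw [coeff_X_mul, coeff_derivative]; push_cast; ring
  have h2 : P1 = 0 := by
    by_contra h0
    have hle := minpoly.degree_le_of_ne_zero K g h0 h1
    have hlt : P1.degree < P.degree := by
      rw [degree_eq_natDegree hmon.ne_zero, degree_lt_iff_coeff_zero]
      intro i hi
      rw [hcoef]
      rcases hi.eq_or_lt with rfl | hi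
      · rw [show P.coeff P.natDegree = 1 from hmon]; simp; ring
      · rw [coeff_eq_zero_of_natDegree_lt hi]; simp
    exact absurd hlt (not_lt.2 hle)
  refine ⟨n, P.coeff 0, minpoly.natDegree_pos hgint, minpoly.coeff_zero_ne_zero hgint hg0, ?_⟩
  have := hcoef 0
  rw [h2] at this
  simp at this
  linear_combination -this

lemma expo_lemma [IsAlgClosed E] (t : M) (ht : Transcendental E t) (p q : E[X])
    (hp : t′ = aeval t p) (hno : ∀ r : E, r′ ≠ p.eval r) (g : M) (hg0 : g ≠ 0)
    (hq : g′ = aeval t q * g) (hg : IsAlgebraic (IntermediateField.adjoin E {t}) g) :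
    ∃ (n : ℕ) (c : E), 0 < n ∧ c ≠ 0 ∧ C c′ = n * q * C c := by
  letI := restrictDiff _ (deriv_adjoin_mem t p hp)
  haveI := restrictDiff_alg _ (deriv_adjoin_mem t p hp)
  have hmem : aeval t q ∈ IntermediateField.adjoin E {t} := by
    rw [IntermediateField.mem_adjoin_simple_iff]
    exact ⟨q, 1, by simp⟩
  obtain ⟨n, a, hn, ha0, ha⟩ := expo_step1 (K := IntermediateField.adjoin E {t}) g hg0 hg
    ⟨aeval t q, hmem⟩ hq
  have ha' : (a : M)′ = n * aeval t q * (a : M) := by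
    have := congrArg (fun x : IntermediateField.adjoin E {t} => (x : M)) ha
    refine Eq.trans (show (a : M)′ = ((a′ : IntermediateField.adjoin E {t}) : M) from rfl) ?_
    simpa using this
  have ha0' : (a : M) ≠ 0 := by simpa using ha0
  have hb : (a : M) ∈ IntermediateField.adjoin E {t} := a.2
  generalize (a : M) = b at *
  classical
  obtain ⟨r, s, hrs⟩ := (IntermediateField.mem_adjoin_simple_iff E _).1 hb
  have inj : Function.Injective (aeval t : E[X] →ₐ[E] M) := transcendental_iff_injective.1 ht
  have hr0 : r ≠ 0 := by rintro rfl; simp at hrs; exact ha0' hrs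
  have hs0 : s ≠ 0 := by rintro rfl; simp at hrs; exact ha0' hrs
  obtain ⟨r1, s1, hcop, hr1, hs1, hb1⟩ : ∃ r1 s1 : E[X], IsCoprime r1 s1 ∧ r1 ≠ 0 ∧ s1 ≠ 0 ∧
      b = aeval t r1 / aeval t s1 := by
    have hgcd : EuclideanDomain.gcd r s ≠ 0 := by
      intro h; exact hr0 (EuclideanDomain.gcd_eq_zero_iff.1 h).1
    obtain ⟨r1, hr1⟩ := EuclideanDomain.gcd_dvd_left r s
    obtain ⟨s1, hs1⟩ := EuclideanDomain.gcd_dvd_right r s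
    refine ⟨r1, s1, ?_, ?_, ?_, ?_⟩
    · have := EuclideanDomain.gcd_eq_gcd_ab r s
      refine ⟨EuclideanDomain.gcdA r s, EuclideanDomain.gcdB r s, ?_⟩
      apply mul_left_cancel₀ hgcd
      linear_combination -this -(EuclideanDomain.gcdA r s) * hr1 - (EuclideanDomain.gcdB r s) * hs1
    · rintro rfl; simp at hr1; exact hr0 hr1
    · rintro rfl; simp at hs1; exact hs0 hs1
    · have hg' : aeval t (EuclideanDomain.gcd r s) ≠ 0 := by
        intro h; exact hgcd (inj (by simpa using h))
      have e1 := congrArg (aeval t) hr1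
      have e2 := congrArg (aeval t) hs1
      rw [map_mul] at e1 e2
      rw [hrs, e1, e2, mul_div_mul_left _ _ hg']
  have hs1' : aeval t s1 ≠ 0 := by
    intro h; exact hs1 (inj (by simpa using h))
  have key : implicitDeriv p r1 * s1 - r1 * implicitDeriv p s1 = n * q * r1 * s1 := by
    apply inj
    have h1 : b * aeval t s1 = aeval t r1 := by rw [hb1]; field_simp
    have h2 := congrArg (fun x => x′) h1
    simp only [Derivation.leibniz, smul_eq_mul, ha', deriv_aeval_eq_implicitDeriv t p hp] at h2
    simp only [map_sub, map_mul, map_natCast]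
    rw [← h1, ← h2]
    ring
  have hr : r1 ∣ implicitDeriv p r1 := by
    apply hcop.dvd_of_dvd_mul_right
    exact ⟨implicitDeriv p s1 + n * q * s1, by linear_combination key⟩
  have hs : s1 ∣ implicitDeriv p s1 := by
    apply hcop.symm.dvd_of_dvd_mul_left
    exact ⟨implicitDeriv p r1 - n * q * r1, by linear_combination -key⟩
  have dr := eq_C_of_natDegree_eq_zero (natDegree_zero_of_dvd p hno r1 hr1 hr)
  have ds := eq_C_of_natDegree_eq_zero (natDegree_zero_of_dvd p hno s1 hs1 hs)
  generalize r1.coeff 0 = x at dr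
  generalize s1.coeff 0 = y at ds
  subst dr ds
  have hx : x ≠ 0 := by simpa using hr1
  have hy : y ≠ 0 := by simpa using hs1
  refine ⟨n, x / y, hn, div_ne_zero hx hy, ?_⟩
  simp only [implicitDeriv_C] at key
  have e1 : C (x / y)′ = C (1 / (y * y)) * (C x′ * C y - C x * C y′) := by
    simp only [← C_mul, ← C_sub]; congr 1
    rw [Derivation.leibniz_div]; simp; field_simp
  have e2 : C (x / y) = C (1 / (y*y)) * (C x * C y) := by
    simp only [← C_mul]; congr 1
    field_simp
  rw [e1, e2, key]; ring
end lemA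

lemma exists_diff_ext {F M : Type*} [Field F] [Field M] [Algebra F M] [Differential F] [CharZero F]
    [Algebra.IsAlgebraic F M] : ∃ _ : Differential M, DifferentialAlgebra F M := by
  classical
  let δ : M → M := fun x => - aeval x (mapCoeffs (minpoly F x)) / aeval x (derivative (minpoly F x))
  have key : ∀ (B : IntermediateField F M) [FiniteDimensional F B] (x : B), ((x′ : B) : M) = δ x := by
    intro B _ x
    have hmp : minpoly F (x : M) = minpoly F x := minpoly.algebraMap_eq (B := B) (B' := M) (Subtype.val_injective) x
    have hsep : aeval (x : M) (derivative (minpoly F (x : M))) ≠ 0 :=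
      Separable.aeval_derivative_ne_zero (Algebra.IsSeparable.isSeparable F (x : M))
        (minpoly.aeval F (x : M))
    simp only [δ]
    rw [eq_div_iff hsep]
    have h := deriv_aeval_eq x (minpoly F x)
    rw [minpoly.aeval] at h
    simp only [map_zero] at h
    have h' := congrArg (algebraMap B M) h
    simp only [map_zero, map_add, map_mul, ← aeval_algebraMap_apply] at h'
    rw [hmp]
    have e : (algebraMap B M) x = (x : M) := rfl
    have e' : (algebraMap B M) x′ = ((x′ : B) : M) := rfl
    rw [e, e'] at h'
    linear_combination -h'
  have two : ∀ x y : M, ∃ B : IntermediateField F M, FiniteDimensional F B ∧ x ∈ B ∧ y ∈ B := by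
    intro x y
    refine ⟨IntermediateField.adjoin F {x, y}, ?_, ?_, ?_⟩
    · apply IntermediateField.finiteDimensional_adjoin
      intro z _
      exact (Algebra.IsAlgebraic.isAlgebraic z).isIntegral
    · exact IntermediateField.subset_adjoin _ _ (by simp)
    · exact IntermediateField.subset_adjoin _ _ (by simp)
  have hadd : ∀ x y, δ (x + y) = δ x + δ y := by
    intro x y
    obtain ⟨B, _, hx, hy⟩ := two x y
    have h1 := key B ⟨x, hx⟩
    have h2 := key B ⟨y, hy⟩
    have h3 := key B (⟨x, hx⟩ + ⟨y, hy⟩)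
    rw [map_add] at h3
    simp only [IntermediateField.coe_add] at h3
    rw [h1, h2] at h3
    exact h3.symm
  have hmul : ∀ x y, δ (x * y) = x • δ y + y • δ x := by
    intro x y
    obtain ⟨B, _, hx, hy⟩ := two x y
    have h1 := key B ⟨x, hx⟩
    have h2 := key B ⟨y, hy⟩
    have h3 := key B (⟨x, hx⟩ * ⟨y, hy⟩)
    rw [Derivation.leibniz] at h3
    simp only [IntermediateField.coe_add, IntermediateField.coe_mul, smul_eq_mul] at h3
    rw [h1, h2] at h3
    exact h3.symm
  let D : Differential M := ⟨Derivation.mk' (AddMonoidHom.toIntLinearMap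
    (AddMonoidHom.mk' δ hadd)) hmul⟩
  refine ⟨D, ⟨fun a => ?_⟩⟩
  change δ (algebraMap F M a) = _
  obtain ⟨B, _, hx, hy⟩ := two 0 0
  have := key B (algebraMap F B a)
  rw [deriv_algebraMap] at this
  exact this.symm

lemma deriv_mem_algClosure {F M : Type*} [Field F] [Field M] [Algebra F M] [Differential F]
    [Differential M] [DifferentialAlgebra F M] [CharZero F] :
    ∀ x ∈ algebraicClosure F M, x′ ∈ algebraicClosure F M := by
  intro x hx
  have hx' : IsAlgebraic F x := mem_algebraicClosure_iff.1 hx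
  have hsep : aeval x (derivative (minpoly F x)) ≠ 0 :=
      Separable.aeval_derivative_ne_zero (minpoly.irreducible hx'.isIntegral).separable
        (minpoly.aeval F (x : M))
  have h := deriv_aeval_eq x (minpoly F x)
  rw [minpoly.aeval] at h
  simp only [map_zero] at h
  have : x′ = - aeval x (mapCoeffs (minpoly F x)) / aeval x (derivative (minpoly F x)) := by
    rw [eq_div_iff hsep]; linear_combination -h
  rw [this]
  have hm : ∀ f : F[X], aeval x f ∈ algebraicClosure F M := fun f =>
    by
      have h2 := (aeval (⟨x, hx⟩ : algebraicClosure F M) f).2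
      rwa [← IntermediateField.aeval_coe] at h2
  exact div_mem (neg_mem (hm _)) (hm _)

lemma transfer_alg {R T M : Type*} [CommRing R] [Field T] [Field M] [Algebra R M] [Algebra T M]
    (hinj : Function.Injective (algebraMap R M))
    (h : ∀ r : R, ∃ t : T, algebraMap T M t = algebraMap R M r) (x : M) (hx : IsAlgebraic R x) :
    IsAlgebraic T x := by
  obtain ⟨P, hP0, hP⟩ := hx
  have : P.map (algebraMap R M) ∈ lifts (algebraMap T M) := by
    rw [lifts_iff_coeff_lifts]
    intro i
    obtain ⟨t, ht⟩ := h (P.coeff i)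
    exact ⟨t, by rw [ht, coeff_map]⟩
  obtain ⟨Q, hQ⟩ := (mem_lifts _).1 this
  refine ⟨Q, ?_, ?_⟩
  · rintro rfl
    rw [Polynomial.map_zero] at hQ
    exact hP0 ((Polynomial.map_eq_zero_iff hinj).1 hQ.symm)
  · rw [← eval_map_algebraMap, hQ, eval_map_algebraMap, hP]

lemma core {k kb M : Type*} [Field k] [Field kb] [Field M] [Algebra k kb] [Algebra k M]
    [Algebra kb M] [IsScalarTower k kb M] [Algebra.IsAlgebraic k kb] [IsAlgClosed kb]
    [IsAlgClosed M] [CharZero kb] [Differential kb] [Differential M] [DifferentialAlgebra kb M]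
    (a b c : kb) (hc : c ≠ 0)
    (hno : ∀ x : kb, x′ ≠ a + b * x + c * x ^ 2)
    (hind : ∀ x y : M, x′ = algebraMap kb M a + algebraMap kb M b * x + algebraMap kb M c * x ^ 2 →
      y′ = algebraMap kb M a + algebraMap kb M b * y + algebraMap kb M c * y ^ 2 → x ≠ y →
      AlgebraicIndependent k ![x, y])
    (l1 l2 l3 : M)
    (h1 : l1′ = algebraMap kb M a + algebraMap kb M b * l1 + algebraMap kb M c * l1 ^ 2)
    (h2 : l2′ = algebraMap kb M a + algebraMap kb M b * l2 + algebraMap kb M c * l2 ^ 2)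
    (h3 : l3′ = algebraMap kb M a + algebraMap kb M b * l3 + algebraMap kb M c * l3 ^ 2)
    (h12 : l1 ≠ l2) (h13 : l1 ≠ l3) (h23 : l2 ≠ l3)
    (halg : Algebra.IsAlgebraic (Algebra.adjoin k {l1, l2}) M) : False := by
  have hcM : algebraMap kb M c ≠ 0 := by simpa using hc
  haveI : CharZero M := charZero_of_injective_algebraMap (algebraMap kb M).injective
  let p : kb[X] := C a + C b * X + C c * X ^ 2
  have hp : l1′ = aeval l1 p := by simp [p, h1]
  let K1 := IntermediateField.adjoin kb {l1}
  letI : Differential K1 := restrictDiff _ (deriv_adjoin_mem l1 p hp)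
  haveI : DifferentialAlgebra K1 M := restrictDiff_alg _ (deriv_adjoin_mem l1 p hp)
  haveI : CharZero K1 := charZero_of_injective_algebraMap (algebraMap kb K1).injective
  let E := algebraicClosure K1 M
  letI : Differential E := restrictDiff _ (deriv_mem_algClosure (F := K1) (M := M))
  haveI : DifferentialAlgebra E M := restrictDiff_alg _ (deriv_mem_algClosure (F := K1) (M := M))
  haveI : CharZero E := charZero_of_injective_algebraMap (algebraMap K1 E).injective
  haveI : IsAlgClosed E := (algebraicClosure.isAlgClosure K1 M).1
  have l1E : l1 ∈ E := mem_algebraicClosure_iff.2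
    (isAlgebraic_algebraMap (⟨l1, IntermediateField.mem_adjoin_simple_self kb l1⟩ : K1))
  have kbE : ∀ x : kb, algebraMap kb M x ∈ E := fun x => mem_algebraicClosure_iff.2
    (isAlgebraic_algebraMap (algebraMap kb K1 x))
  -- no other solution is algebraic over K1
  have T : ∀ l : M, l′ = algebraMap kb M a + algebraMap kb M b * l + algebraMap kb M c * l ^ 2 →
      l1 ≠ l → ¬ IsAlgebraic K1 l := by
    intro l hl hne hal
    have hi := (hind l1 l h1 hl hne).transcendental_adjoin (s := {0}) (i := 1) (by simp)
    have hset : ![l1, l] '' {0} = {l1} := by simp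
    rw [hset] at hi
    simp only [Matrix.cons_val_one] at hi
    apply hi
    let F1 := IntermediateField.adjoin k {l1}
    let A1 := algebraicClosure F1 M
    have hkb : ∀ x : kb, algebraMap kb M x ∈ A1 := by
      intro x
      have hx : IsAlgebraic k (algebraMap kb M x) :=
        (Algebra.IsAlgebraic.isAlgebraic (R := k) x).algebraMap
      exact mem_algebraicClosure_iff.2 (hx.tower_top F1)
    have hl1 : l1 ∈ A1 := mem_algebraicClosure_iff.2
      (isAlgebraic_algebraMap (⟨l1, IntermediateField.mem_adjoin_simple_self k l1⟩ : F1))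
    have haev : ∀ f : kb[X], aeval l1 f ∈ A1 := by
      intro f
      induction f using Polynomial.induction_on' with
      | add f g hf hg => rw [map_add]; exact add_mem hf hg
      | monomial n x => rw [aeval_monomial]; exact mul_mem (hkb x) (pow_mem hl1 n)
    have hA1 : IsAlgebraic A1 l := by
      refine transfer_alg (R := K1) (algebraMap K1 M).injective ?_ l hal
      rintro ⟨r, hr⟩
      obtain ⟨f, g, rfl⟩ := (IntermediateField.mem_adjoin_simple_iff kb _).1 hr
      exact ⟨⟨_, div_mem (haev f) (haev g)⟩, rfl⟩
    have hmem : l ∈ algebraicClosure A1 M := mem_algebraicClosure_iff.2 hA1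
    rw [algebraicClosure.algebraicClosure_eq_bot] at hmem
    obtain ⟨y, hy⟩ := IntermediateField.mem_bot.1 hmem
    have : l ∈ A1 := by rw [← hy]; exact y.2
    exact IntermediateField.isAlgebraic_adjoin_iff.1 (mem_algebraicClosure_iff.1 this)
  have hl1tr : Transcendental kb l1 := by
    intro h
    have h' : IsAlgebraic k l1 := IsAlgebraic.restrictScalars k h
    exact (hind l1 l2 h1 h2 h12).transcendental 0 h'
  have hw0 : l2 - l1 ≠ 0 := sub_ne_zero.2 h12.symm
  have hv0 : l3 - l1 ≠ 0 := sub_ne_zero.2 h13.symm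
  have dinv : ∀ l : M, l′ = algebraMap kb M a + algebraMap kb M b * l + algebraMap kb M c * l ^ 2 →
      l - l1 ≠ 0 → ((l - l1)⁻¹)′ = - (algebraMap kb M b + 2 * algebraMap kb M c * l1) * (l - l1)⁻¹
        - algebraMap kb M c := by
    intro l hl h0
    rw [Derivation.leibniz_inv]
    simp only [map_sub, hl, h1, smul_eq_mul]
    field_simp
    ring
  let bE : E := ⟨algebraMap kb M b + 2 * algebraMap kb M c * l1,
    add_mem (kbE b) (mul_mem (mul_mem (by exact_mod_cast natCast_mem E 2) (kbE c)) l1E)⟩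
  let cE : E := ⟨algebraMap kb M c, kbE c⟩
  have hbE : algebraMap E M bE = algebraMap kb M b + 2 * algebraMap kb M c * l1 := rfl
  have hcE : algebraMap E M cE = algebraMap kb M c := rfl
  have Emem : ∀ x : M, IsAlgebraic E x → x ∈ E := by
    intro x hx
    have hmem : x ∈ algebraicClosure E M := mem_algebraicClosure_iff.2 hx
    rw [algebraicClosure.algebraicClosure_eq_bot] at hmem
    obtain ⟨y, hy⟩ := IntermediateField.mem_bot.1 hmem
    rw [← hy]; exact y.2
  have htr : Transcendental E (l2 - l1)⁻¹ := by
    intro h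
    have h' := add_mem (inv_mem (Emem _ h)) l1E
    rw [inv_inv, sub_add_cancel] at h'
    exact T l2 h2 h12 (mem_algebraicClosure_iff.1 h')
  set g : M := (l3 - l1)⁻¹ - (l2 - l1)⁻¹ with hg
  have hg0 : g ≠ 0 := by
    intro h
    have := inv_injective (sub_eq_zero.1 h)
    exact h23 (by linear_combination -this)
  obtain ⟨n, e, hn, he0, he⟩ := expo_lemma (E := E) (l2 - l1)⁻¹ htr (C (-bE) * X - C cE) (C (-bE))
    (by
      rw [dinv l2 h2 hw0]
      simp only [map_sub, map_mul, aeval_C, aeval_X, map_neg, hbE, hcE])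
    (by
      intro r hr
      have hr' : (algebraMap E M r)′ = - algebraMap E M bE * algebraMap E M r
        - algebraMap E M cE := by
        rw [deriv_algebraMap, hr]; simp
      have hr0 : algebraMap E M r ≠ 0 := by
        intro h0
        rw [h0, hcE] at hr'
        simp at hr'
        exact hc hr'
      refine T (l1 + (algebraMap E M r)⁻¹) ?_ ?_ ?_
      · rw [map_add, h1, Derivation.leibniz_inv, hr', hbE, hcE]
        simp only [smul_eq_mul]
        field_simp
        ring
      · simpa using hr0
      · exact mem_algebraicClosure_iff.1 (add_mem l1E (inv_mem r.2)))
    g hg0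
    (by
      rw [hg, map_sub, dinv l2 h2 hw0, dinv l3 h3 hv0]
      simp [hbE]
      ring)
    (by
      refine transfer_alg (R := Algebra.adjoin k {l1, l2}) Subtype.val_injective ?_ g
        (Algebra.IsAlgebraic.isAlgebraic g)
      rintro ⟨r, hr⟩
      suffices hh : r ∈ IntermediateField.adjoin E {(l2 - l1)⁻¹} from ⟨⟨r, hh⟩, rfl⟩
      have hEE : ∀ x ∈ E, x ∈ IntermediateField.adjoin E {(l2 - l1)⁻¹} := fun x hx =>
        (IntermediateField.adjoin E {(l2 - l1)⁻¹}).algebraMap_mem ⟨x, hx⟩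
      induction hr using Algebra.adjoin_induction with
      | mem x hx =>
        rcases hx with rfl | rfl
        · exact hEE _ l1E
        · have h' := add_mem (inv_mem (IntermediateField.mem_adjoin_simple_self E (x - l1)⁻¹))
            (hEE _ l1E)
          rwa [inv_inv, sub_add_cancel] at h'
      | algebraMap x =>
        rw [IsScalarTower.algebraMap_apply k kb M]
        exact hEE _ (kbE _)
      | add x y _ _ hx hy => exact add_mem hx hy
      | mul x y _ _ hx hy => exact mul_mem hx hy)
  have he' : e′ = n * (-bE) * e := by
    apply C_injective
    rw [he]; simp
  obtain ⟨f, hf⟩ := IsAlgClosed.exists_pow_nat_eq e hn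
  have hf0 : f ≠ 0 := by
    rintro rfl
    rw [zero_pow hn.ne'] at hf
    exact he0 hf.symm
  have hf' : f′ = -bE * f := by
    rw [← hf, Derivation.leibniz_pow] at he'
    obtain ⟨m, rfl⟩ : ∃ m, n = m + 1 := ⟨n - 1, by omega⟩
    have hnn : ((m + 1 : ℕ) : E) ≠ 0 := Nat.cast_ne_zero.2 hn.ne'
    simp only [nsmul_eq_mul, smul_eq_mul, Nat.add_sub_cancel] at he'
    apply mul_left_cancel₀ (mul_ne_zero hnn (pow_ne_zero m hf0))
    rw [mul_assoc, he']
    ring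
  obtain ⟨m, d, hm, hd0, hd⟩ := expo_lemma (E := kb) l1 hl1tr p (-(C b + C 2 * C c * X)) hp
    (by intro r; simpa [p] using hno r) (algebraMap E M f) (by simpa using hf0)
    (by
      rw [deriv_algebraMap, hf', map_mul, map_neg, hbE]
      simp only [map_add, map_mul, aeval_C, aeval_X, map_neg, map_ofNat])
    (mem_algebraicClosure_iff.1 f.2)
  have := congrArg (fun q => coeff q 1) hd
  simp only [coeff_mul_C] at this
  rw [show ((m : kb[X])) = C (m : kb) by simp, coeff_C_mul, ← C_mul] at this
  simp [coeff_C, hc, hd0] at this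
  omega

section matrices
open Matrix

lemma map_deriv_mul {M : Type*} [Field M] [Differential M] (A B : Matrix (Fin 2) (Fin 2) M) :
    (A * B).map (fun x => x′) = A.map (fun x => x′) * B + A * B.map (fun x => x′) := by
  ext i j
  simp [Matrix.mul_apply, Fin.sum_univ_two]
  ring

lemma mulVec_deriv {M : Type*} [Field M] [Differential M] (A : Matrix (Fin 2) (Fin 2) M) (n : ℕ)
    (i : Fin 2) :
    ((A *ᵥ ![1, (n : M)]) i)′ = (A.map (fun x => x′) *ᵥ ![1, (n : M)]) i := by
  simp [Matrix.mulVec, dotProduct, Fin.sum_univ_two, mul_comm]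

lemma eq_zero_of_two {M : Type*} [Field M] [CharZero M] (Z : Matrix (Fin 2) (Fin 2) M) (n m : ℕ)
    (hnm : n ≠ m) (hn : Z *ᵥ ![1, (n : M)] = 0) (hm : Z *ᵥ ![1, (m : M)] = 0) : Z = 0 := by
  have hd : (n : M) - m ≠ 0 := sub_ne_zero.2 (by exact_mod_cast hnm)
  have key : ∀ i, Z i 0 = 0 ∧ Z i 1 = 0 := by
    intro i
    have e1 := congrFun hn i
    have e2 := congrFun hm i
    simp [Matrix.mulVec, dotProduct, Fin.sum_univ_two] at e1 e2
    have h1 : Z i 1 = 0 := by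
      apply mul_right_cancel₀ hd
      linear_combination e1 - e2
    exact ⟨by rw [h1] at e1; simpa using e1, h1⟩
  ext i j
  fin_cases j
  · exact (key i).1
  · exact (key i).2

lemma three_good (G : ℕ → Prop) (h : ∀ n m, n ≠ m → G n ∨ G m) :
    ∃ n1 n2 n3, n1 ≠ n2 ∧ n1 ≠ n3 ∧ n2 ≠ n3 ∧ G n1 ∧ G n2 ∧ G n3 := by
  by_cases h0 : G 0
  · by_cases h1 : G 1
    · by_cases h2 : G 2
      · exact ⟨0, 1, 2, by simp, by simp, by simp, h0, h1, h2⟩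
      · exact ⟨0, 1, 3, by simp, by simp, by simp, h0, h1, (h 2 3 (by simp)).resolve_left h2⟩
    · exact ⟨0, 2, 3, by simp, by simp, by simp, h0, (h 1 2 (by simp)).resolve_left h1,
        (h 1 3 (by simp)).resolve_left h1⟩
  · exact ⟨1, 2, 3, by simp, by simp, by simp, (h 0 1 (by simp)).resolve_left h0,
      (h 0 2 (by simp)).resolve_left h0, (h 0 3 (by simp)).resolve_left h0⟩

lemma inj3 {M : Type*} (l1 l2 l3 : M) (d12 : l1 ≠ l2) (d13 : l1 ≠ l3) (d23 : l2 ≠ l3) :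
    Function.Injective ![l1, l2, l3] := by
  intro i j hij
  fin_cases i <;> fin_cases j <;> simp_all [eq_comm]

lemma prop_vec {M : Type*} [Field M] (Z : Matrix (Fin 2) (Fin 2) M) (hZ : Z.det = 0)
    (v w : Fin 2 → M) (hv : Z *ᵥ v ≠ 0) : ∃ μ : M, Z *ᵥ w = μ • (Z *ᵥ v) := by
  have hdet : (Z *ᵥ v) 0 * (Z *ᵥ w) 1 = (Z *ᵥ v) 1 * (Z *ᵥ w) 0 := by
    rw [Matrix.det_fin_two] at hZ
    simp [Matrix.mulVec, dotProduct, Fin.sum_univ_two]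
    linear_combination (v 0 * w 1 - v 1 * w 0) * hZ
  generalize Z *ᵥ v = x at *
  generalize Z *ᵥ w = y at *
  by_cases h0 : x 0 = 0
  · have h1 : x 1 ≠ 0 := by
      intro h1
      apply hv
      ext i; fin_cases i
      · exact h0
      · exact h1
    refine ⟨y 1 / x 1, ?_⟩
    rw [h0, zero_mul] at hdet
    have hy : y 0 = 0 := (mul_eq_zero.1 hdet.symm).resolve_left h1
    ext i; fin_cases i
    · simp [h0, hy]
    · simp [h1]
  · refine ⟨y 0 / x 0, ?_⟩
    ext i; fin_cases i
    · simp [h0]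
    · simp; field_simp; linear_combination hdet

lemma three_sols {M : Type*} [Field M] [CharZero M] [Differential M]
    (U V θ : Matrix (Fin 2) (Fin 2) M) (ξ β a₁ a₂ a₃ s r : M) (hξ0 : ξ ≠ 0) (hβ : β ≠ 0)
    (hs : ξ′ = s * ξ)
    (hU : U * U = (ξ ^ 2) • (1 : Matrix (Fin 2) (Fin 2) M))
    (hV : V * V = β • (1 : Matrix (Fin 2) (Fin 2) M)) (hVU : V * U = -(U * V))
    (hθ : θ = a₁ • U + a₂ • V + a₃ • (U * V))
    (hdU : U.map (fun x => x′) = s • U + (U * θ - θ * U))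
    (hdV : V.map (fun x => x′) = r • V + (V * θ - θ * V)) :
    ∃ l : Fin 3 → M, Function.Injective l ∧ ∀ i, (l i)′ = (a₂ + a₃ * ξ) * β
      + (2 * a₁ * ξ + r) * l i - (a₂ - a₃ * ξ) * (l i) ^ 2 := by
  set I := (1 : Matrix (Fin 2) (Fin 2) M) with hI
  set X := ξ • I - U with hX
  set Y := ξ • I + U with hY
  have hV0 : V ≠ 0 := by
    rintro rfl
    have := congrFun (congrFun hV 0) 0
    simp [hI] at this
    exact hβ this.symm
  have hXU : X * U = (-ξ) • X := by
    simp only [hX, sub_mul, hU, smul_mul_assoc, hI, one_mul, smul_sub, smul_smul]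
    module
  have hYU : Y * U = ξ • Y := by
    simp only [hY, add_mul, hU, smul_mul_assoc, hI, one_mul, smul_add, smul_smul]
    rw [pow_two]; abel
  have hYV : Y * V = V * X := by
    simp only [hX, hY, add_mul, mul_sub, hVU, smul_mul_assoc, mul_smul_comm, hI, one_mul, mul_one]
    abel
  have hXV : X * V = V * Y := by
    simp only [hX, hY, sub_mul, mul_add, hVU, smul_mul_assoc, mul_smul_comm, hI, one_mul, mul_one]
    abel
  have hVinj : ∀ Z, V * Z = 0 → Z = 0 := by
    intro Z hZ
    have : V * (V * Z) = β • Z := by rw [← mul_assoc, hV, smul_mul_assoc, hI, one_mul]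
    rw [hZ, mul_zero] at this
    exact (smul_eq_zero.1 this.symm).resolve_left hβ
  have hXX : X * X = (2 * ξ) • X := by
    nth_rewrite 2 [hX]
    rw [mul_sub, hXU, mul_smul_comm, hI, mul_one, two_mul, add_smul, neg_smul]; abel
  have hYY : Y * Y = (2 * ξ) • Y := by
    nth_rewrite 2 [hY]
    rw [mul_add, hYU, mul_smul_comm, hI, mul_one, two_mul, add_smul]
  have hXY : X * Y = 0 := by
    nth_rewrite 1 [hY]
    rw [mul_add, hXU, mul_smul_comm, hI, mul_one, neg_smul]; abel
  have hXYsum : X + Y = (2 * ξ) • I := by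
    simp only [hX, hY]; rw [two_mul, add_smul]; abel
  have h2ξ : 2 * ξ ≠ 0 := mul_ne_zero two_ne_zero hξ0
  have hI0 : I ≠ 0 := one_ne_zero
  have hY0 : Y ≠ 0 := by
    intro h
    have hX0 : X = 0 := hVinj _ (by rw [← hYV, h, zero_mul])
    rw [h, hX0, add_zero] at hXYsum
    exact (smul_ne_zero h2ξ hI0) hXYsum.symm
  have hX0 : X ≠ 0 := by
    intro h
    exact hY0 (hVinj _ (by rw [← hXV, h, zero_mul]))
  have hdet : X.det = 0 := by
    by_contra hd
    have hu : IsUnit X := (Matrix.isUnit_iff_isUnit_det X).2 (isUnit_iff_ne_zero.2 hd)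
    exact hY0 ((hu.mul_right_eq_zero).1 hXY)
  have hdX : X.map (fun x => x′) = s • X + (X * θ - θ * X) := by
    have : X.map (fun x => x′) = (s * ξ) • I - U.map (fun x => x′) := by
      ext i j
      by_cases hij : i = j <;> simp [hX, hI, hij, hs]
    rw [this, hdU, hX]
    simp only [sub_mul, mul_sub, smul_mul_assoc, mul_smul_comm, hI, one_mul, mul_one, smul_sub,
      smul_smul]
    abel
  have hdY : Y.map (fun x => x′) = s • Y + (Y * θ - θ * Y) := by
    have : Y.map (fun x => x′) = (s * ξ) • I + U.map (fun x => x′) := by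
      ext i j
      by_cases hij : i = j <;> simp [hY, hI, hij, hs]
    rw [this, hdU, hY]
    simp only [add_mul, mul_add, smul_mul_assoc, mul_smul_comm, hI, one_mul, mul_one, smul_add,
      smul_smul]
    abel
  have hdVY : (V * Y).map (fun x => x′) = (r + s) • (V * Y) + ((V * Y) * θ - θ * (V * Y)) := by
    rw [map_deriv_mul, hdV, hdY]
    simp only [add_mul, mul_add, sub_mul, mul_sub, smul_mul_assoc, mul_smul_comm, add_smul,
      mul_assoc]
    abel
  have hVYθ : V * Y * θ = (a₁ * ξ) • (V * Y) + ((a₂ + a₃ * ξ) * β) • X := by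
    have e1 : V * Y * U = ξ • (V * Y) := by rw [mul_assoc, hYU, mul_smul_comm]
    have e2 : V * Y * V = β • X := by
      rw [mul_assoc, hYV, ← mul_assoc, hV, smul_mul_assoc, hI, one_mul]
    rw [hθ, mul_add, mul_add, mul_smul_comm, mul_smul_comm, mul_smul_comm, ← mul_assoc (V * Y),
      e1, e2, smul_mul_assoc, e2]
    module
  have hXθ : X * θ = (-(a₁ * ξ)) • X + (a₂ - a₃ * ξ) • (V * Y) := by
    rw [hθ, mul_add, mul_add, mul_smul_comm, mul_smul_comm, mul_smul_comm, ← mul_assoc X,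
      hXU, hXV, smul_mul_assoc, hXV]
    module
  clear_value X Y
  have sol : ∀ n : ℕ, X *ᵥ ![1, (n : M)] ≠ 0 → ∃ μ : M,
      (V * Y) *ᵥ ![1, (n : M)] = μ • (X *ᵥ ![1, (n : M)]) ∧
      μ′ = (a₂ + a₃ * ξ) * β + (2 * a₁ * ξ + r) * μ - (a₂ - a₃ * ξ) * μ ^ 2 := by
    intro n hn
    obtain ⟨μ, hμ⟩ := prop_vec X hdet _ (V *ᵥ ![1, (n : M)]) hn
    rw [Matrix.mulVec_mulVec, hXV] at hμ
    refine ⟨μ, hμ, ?_⟩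
    set w := ![1, (n : M)] with hw
    have hP : ∀ i, (((V * Y) *ᵥ w) i)′ = (((V * Y).map (fun x => x′)) *ᵥ w) i :=
      mulVec_deriv (V * Y) n
    have hN : ∀ i, ((X *ᵥ w) i)′ = ((X.map (fun x => x′)) *ᵥ w) i :=
      mulVec_deriv X n
    have hθP : (θ * (V * Y)) *ᵥ w = μ • ((θ * X) *ᵥ w) := by
      rw [← Matrix.mulVec_mulVec, hμ, Matrix.mulVec_smul, Matrix.mulVec_mulVec]
    have main : ∀ i, μ′ * (X *ᵥ w) i = ((a₂ + a₃ * ξ) * β + (2 * a₁ * ξ + r) * μ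
        - (a₂ - a₃ * ξ) * μ ^ 2) * (X *ᵥ w) i := by
      intro i
      have h1 := hP i
      have h3 := hN i
      rw [hμ] at h1
      rw [hdVY, hVYθ, Matrix.add_mulVec, Matrix.sub_mulVec, Matrix.add_mulVec, Matrix.smul_mulVec,
        Matrix.smul_mulVec, Matrix.smul_mulVec, hθP, hμ] at h1
      rw [hdX, hXθ, Matrix.add_mulVec, Matrix.sub_mulVec, Matrix.add_mulVec, Matrix.smul_mulVec,
        Matrix.smul_mulVec, Matrix.smul_mulVec, hμ] at h3
      simp only [Pi.smul_apply, Pi.add_apply, Pi.sub_apply, smul_eq_mul, Derivation.leibniz] at h1 h3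
      linear_combination h1 - μ * h3
    obtain ⟨i, hi⟩ := Function.ne_iff.1 hn
    exact mul_right_cancel₀ hi (main i)
  have dist : ∀ n m : ℕ, n ≠ m → ∀ μ : M, (V * Y) *ᵥ ![1, (n : M)] = μ • (X *ᵥ ![1, (n : M)]) →
      (V * Y) *ᵥ ![1, (m : M)] = μ • (X *ᵥ ![1, (m : M)]) → False := by
    intro n m hnm μ h1 h2
    have hz : V * Y - μ • X = 0 := by
      apply eq_zero_of_two _ n m hnm
      · rw [Matrix.sub_mulVec, Matrix.smul_mulVec, h1, sub_self]
      · rw [Matrix.sub_mulVec, Matrix.smul_mulVec, h2, sub_self]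
    have h3 : V * ((2 * ξ) • Y) = 0 := by
      have := congrArg (fun Z => Z * Y) hz
      simpa [sub_mul, mul_assoc, hXY, hYY] using this
    exact (smul_ne_zero h2ξ hY0) (hVinj _ h3)
  obtain ⟨n1, n2, n3, h12, h13, h23, g1, g2, g3⟩ :=
    three_good (fun n => X *ᵥ ![1, (n : M)] ≠ 0) (by
      intro n m hnm
      by_contra! hcon
      exact hX0 (eq_zero_of_two X n m hnm hcon.1 hcon.2))
  obtain ⟨l1, e1, f1⟩ := sol n1 g1
  obtain ⟨l2, e2, f2⟩ := sol n2 g2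
  obtain ⟨l3, e3, f3⟩ := sol n3 g3
  refine ⟨![l1, l2, l3], ?_, ?_⟩
  · have d12 : l1 ≠ l2 := by rintro rfl; exact dist _ _ h12 _ e1 e2
    have d13 : l1 ≠ l3 := by rintro rfl; exact dist _ _ h13 _ e1 e3
    have d23 : l2 ≠ l3 := by rintro rfl; exact dist _ _ h23 _ e2 e3
    exact inj3 _ _ _ d12 d13 d23
  · intro i
    fin_cases i
    · exact f1
    · exact f2
    · exact f3
end matrices

/-- package a derivation -/
noncomputable abbrev toDiff {A : Type*} [CommRing A] (δ : A → A) (h : IsRingDeriv δ) : Differential A :=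
  ⟨Derivation.mk' (AddMonoidHom.toIntLinearMap (AddMonoidHom.mk' δ h.map_add))
    (fun a b => by
      change δ (a * b) = a * δ b + b * δ a
      rw [h.leibniz]; ring)⟩

lemma isRingDeriv_deriv (M : Type*) [CommRing M] [Differential M] :
    IsRingDeriv (fun x : M => x′) :=
  ⟨fun x y => by simp, fun x y => by simp; ring⟩

lemma trdeg_le_two {k L M : Type u} [Field k] [Field L] [Field M] [Algebra k L] [Algebra k M]
    [Algebra L M] [IsScalarTower k L M] [Algebra.IsAlgebraic L M] (h : ¬ TrdegGE k L 3) :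
    Algebra.trdeg k M ≤ 2 := by
  have h1 := trdeg_add_eq k L (A := M)
  rw [trdeg_eq_zero_iff.2 (inferInstance : Algebra.IsAlgebraic L M), add_zero] at h1
  rw [← h1]
  by_contra hlt
  apply h
  have h3 : (3 : Cardinal) ≤ Algebra.trdeg k L := by
    have := Order.succ_le_of_lt (not_le.1 hlt)
    have e : Order.succ (2 : Cardinal) = 3 := by
      have := Cardinal.nat_succ 2
      norm_num at this
      exact this.symm
    rwa [e] at this
  obtain ⟨s, hs⟩ := exists_isTranscendenceBasis k L
  rw [← hs.cardinalMk_eq_trdeg] at h3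
  have h4 : Cardinal.lift.{u} (Cardinal.mk (Fin 3)) ≤ Cardinal.lift.{0} (Cardinal.mk s) := by
    simpa using h3
  obtain ⟨e⟩ := Cardinal.lift_mk_le'.1 h4
  exact ⟨_, hs.1.comp e e.injective⟩

lemma isAlg_of_trdeg {k M : Type u} [Field k] [Field M] [Algebra k M] (h : Algebra.trdeg k M ≤ 2)
    (x y : M) (hxy : AlgebraicIndependent k ![x, y]) :
    Algebra.IsAlgebraic (Algebra.adjoin k {x, y}) M := by
  have hb := hxy.isTranscendenceBasis_of_lift_trdeg_le_of_finite (by simpa using h)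
  have := hb.isAlgebraic
  have hr : Set.range ![x, y] = {x, y} := by simp [Set.pair_comm]
  rwa [hr] at this

lemma sqrt_deriv {N : Type*} [Field N] [CharZero N] [Differential N] (z A : N) (hz : z ≠ 0)
    (h : z ^ 2 = A) : z′ = A′ / (2 * A) * z := by
  subst h
  simp only [Derivation.leibniz_pow, smul_eq_mul, nsmul_eq_mul]
  field_simp
  simp

lemma inv_sol {N : Type*} [Field N] [CharZero N] [Differential N] (a b z B l : N)
    (hB : B ≠ 0) (hl : l ≠ 0)
    (h : l′ = (b * z + b * z) * B + 2 * (a * z + B′ / (4 * B)) * l - (b * z - b * z) * l ^ 2) :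
    (B / l)′ = (b * z + b * -z) * B + 2 * (a * -z + B′ / (4 * B)) * (B / l)
      - (b * z - b * -z) * (B / l) ^ 2 := by
  rw [Derivation.leibniz_div, h]
  simp only [smul_eq_mul]
  field_simp
  ring


theorem stmt_8_aux (k : Type u) [Field k] [CharZero k]
    (δk : k → k) (hδk : IsRingDeriv δk)
    (α β : k) (hα : α ≠ 0) (hβ : β ≠ 0)
    (Q : Type u) [Ring Q] [Algebra k Q]
    (u v : Q) (hu : u * u = algebraMap k Q α) (hv : v * v = algebraMap k Q β)
    (huv : v * u = -(u * v))
    (bQ : Module.Basis (Fin 4) k Q) (hbQ : ⇑bQ = ![1, u, v, u * v])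
    (d : Q → Q) (hd : IsRingDeriv d) (hdk : RestrictsTo δk d)
    (a₁ a₂ a₃ : k) (ϑ : Q)
    (hϑ : ϑ = algebraMap k Q a₁ * u + algebraMap k Q a₂ * v + algebraMap k Q a₃ * (u * v))
    (hdu : d u = algebraMap k Q (δk α / (2 * α)) * u + (u * ϑ - ϑ * u))
    (hdv : d v = algebraMap k Q (δk β / (2 * β)) * v + (v * ϑ - ϑ * v))
    (kb : Type u) [Field kb] [Algebra k kb] [IsAlgClosure k kb]
    (δkb : kb → kb) (hδkb : IsRingDeriv δkb) (hreskb : RestrictsTo δk δkb)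
    (ξ : kb) (hξ : ξ ^ 2 = algebraMap k kb α)
    (hnosol : ∀ x : kb,
      δkb x ≠ (algebraMap k kb a₂ + algebraMap k kb a₃ * ξ) * algebraMap k kb β
        + 2 * (algebraMap k kb a₁ * ξ + algebraMap k kb (δk β / (4 * β))) * x
        - (algebraMap k kb a₂ - algebraMap k kb a₃ * ξ) * x ^ 2)
    (hindep : ∀ (M : Type u) (_ : Field M) (_ : Algebra k M) (δM : M → M),
      IsRingDeriv δM → RestrictsTo δk δM →
      ∀ ξM : M, ξM ^ 2 = algebraMap k M α →
      ∀ l₁ l₂ : M,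
        (δM l₁ = (algebraMap k M a₂ + algebraMap k M a₃ * ξM) * algebraMap k M β
          + 2 * (algebraMap k M a₁ * ξM + algebraMap k M (δk β / (4 * β))) * l₁
          - (algebraMap k M a₂ - algebraMap k M a₃ * ξM) * l₁ ^ 2) →
        (δM l₂ = (algebraMap k M a₂ + algebraMap k M a₃ * ξM) * algebraMap k M β
          + 2 * (algebraMap k M a₁ * ξM + algebraMap k M (δk β / (4 * β))) * l₂
          - (algebraMap k M a₂ - algebraMap k M a₃ * ξM) * l₂ ^ 2) →
        l₁ ≠ l₂ → AlgebraicIndependent k ![l₁, l₂])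
    (L : Type u) [Field L] [Algebra k L]
    (δL : L → L) (hδL : IsRingDeriv δL) (hresL : RestrictsTo δk δL)
    (hsplit : DiffSplits k Q d L δL) :
    TrdegGE k L 3 := by
  classical
  by_contra hcon
  letI dk : Differential k := toDiff δk hδk
  letI dL : Differential L := toDiff δL hδL
  letI dkb : Differential kb := toDiff δkb hδkb
  haveI : DifferentialAlgebra k L := ⟨hresL⟩
  haveI : DifferentialAlgebra k kb := ⟨hreskb⟩
  haveI : CharZero L := charZero_of_injective_algebraMap (algebraMap k L).injective
  haveI : CharZero kb := charZero_of_injective_algebraMap (algebraMap k kb).injective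
  let M := AlgebraicClosure L
  haveI : CharZero M := charZero_of_injective_algebraMap (algebraMap L M).injective
  obtain ⟨dM, hLM⟩ := exists_diff_ext (F := L) (M := M)
  haveI : DifferentialAlgebra k M := ⟨fun a => by
    rw [IsScalarTower.algebraMap_apply k L M, deriv_algebraMap, deriv_algebraMap,
      ← IsScalarTower.algebraMap_apply k L M]⟩
  haveI : Algebra.IsAlgebraic k kb := IsAlgClosure.isAlgebraic
  haveI : IsAlgClosed kb := IsAlgClosure.isAlgClosed k
  let i : kb →ₐ[k] M := IsAlgClosed.lift
  letI : Algebra kb M := i.toRingHom.toAlgebra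
  have hi : ∀ x, algebraMap kb M x = i x := fun x => rfl
  haveI : IsScalarTower k kb M := IsScalarTower.of_algebraMap_eq fun x => (i.commutes x).symm
  haveI : DifferentialAlgebra kb M := ⟨fun a => by
    rw [hi, hi, ← algHom_deriv' i i.injective]⟩
  have hkM : ∀ x : k, algebraMap kb M (algebraMap k kb x) = algebraMap k M x := fun x =>
    (IsScalarTower.algebraMap_apply k kb M x).symm
  have hδM := isRingDeriv_deriv M
  have hresM : RestrictsTo δk (fun x : M => x′) := fun c => deriv_algebraMap (A := k) (B := M) c
  set ζ : M := algebraMap kb M ξ with hζ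
  have hζ2 : ζ ^ 2 = algebraMap k M α := by rw [hζ, ← map_pow, hξ, hkM]
  have hαM : algebraMap k M α ≠ 0 := by simpa using hα
  have hβM : algebraMap k M β ≠ 0 := by simpa using hβ
  have hζ0 : ζ ≠ 0 := by
    intro h; rw [h] at hζ2; apply hαM; rw [← hζ2]; ring
  have hdα : algebraMap k M (δk α) = (algebraMap k M α)′ := (hresM α).symm
  have hdβ : algebraMap k M (δk β) = (algebraMap k M β)′ := (hresM β).symm
  have hζd : ζ′ = algebraMap k M (δk α / (2 * α)) * ζ := by
    rw [map_div₀, map_mul, hdα, map_ofNat]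
    exact sqrt_deriv _ _ hζ0 hζ2
  -- matrices
  obtain ⟨D, hD, hDt, φ, hφ⟩ := hsplit
  let ψ : Q →ₐ[k] Matrix (Fin 2) (Fin 2) L :=
    (φ.toAlgHom.restrictScalars k).comp Algebra.TensorProduct.includeRight
  have hψ : ∀ x, ψ (d x) = (ψ x).map δL := by
    intro x
    change φ (1 ⊗ₜ d x) = (φ (1 ⊗ₜ x)).map δL
    rw [← hφ, hDt]
    have : δL 1 = 0 := (show (1 : L)′ = 0 by simp)
    rw [this, TensorProduct.zero_tmul, zero_add]
  let Ψ : Q →ₐ[k] Matrix (Fin 2) (Fin 2) M :=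
    (AlgHom.mapMatrix (IsScalarTower.toAlgHom k L M)).comp ψ
  have hΨ : ∀ x, Ψ (d x) = (Ψ x).map (fun x => x′) := by
    intro x
    change (ψ (d x)).map (algebraMap L M) = ((ψ x).map (algebraMap L M)).map _
    rw [hψ]
    ext i j
    exact (deriv_algebraMap (A := L) (B := M) _).symm
  have hsm : ∀ (c : k) (x : Q), Ψ (algebraMap k Q c * x) = (algebraMap k M c) • Ψ x := by
    intro c x
    rw [← Algebra.smul_def, map_smul, algebraMap_smul]
  have hsc : ∀ (c : k), Ψ (algebraMap k Q c) =
      (algebraMap k M c) • (1 : Matrix (Fin 2) (Fin 2) M) := by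
    intro c
    rw [← mul_one (algebraMap k Q c), hsm, map_one]
  obtain ⟨l, hlinj, hl⟩ := three_sols (Ψ u) (Ψ v) (Ψ ϑ) ζ (algebraMap k M β)
    (algebraMap k M a₁) (algebraMap k M a₂) (algebraMap k M a₃)
    (algebraMap k M (δk α / (2 * α))) (algebraMap k M (δk β / (2 * β))) hζ0 hβM hζd
    (by rw [← map_mul, hu, hsc, hζ2]) (by rw [← map_mul, hv, hsc])
    (by rw [← map_mul, huv, map_neg, map_mul])
    (by rw [hϑ, map_add, map_add, hsm, hsm, hsm, map_mul])
    (by rw [← hΨ, hdu, map_add, hsm, map_sub, map_mul, map_mul])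
    (by rw [← hΨ, hdv, map_add, hsm, map_sub, map_mul, map_mul])
  have hr : algebraMap k M (δk β / (2 * β)) = 2 * algebraMap k M (δk β / (4 * β)) := by
    have : δk β / (2 * β) = 2 * (δk β / (4 * β)) := by field_simp; norm_num
    rw [this, map_mul, map_ofNat]
  have hl' : ∀ j, (l j)′ = (algebraMap k M a₂ + algebraMap k M a₃ * ζ) * algebraMap k M β
          + 2 * (algebraMap k M a₁ * ζ + algebraMap k M (δk β / (4 * β))) * l j
          - (algebraMap k M a₂ - algebraMap k M a₃ * ζ) * (l j) ^ 2 := by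
    intro j
    rw [hl j, hr]; ring
  have hind := hindep M inferInstance inferInstance (fun x : M => x′) hδM hresM
  have h01 : l 0 ≠ l 1 := fun h => by simpa using hlinj h
  have h02 : l 0 ≠ l 2 := fun h => by simpa using hlinj h
  have h12 : l 1 ≠ l 2 := fun h => by simpa using hlinj h
  have hI01 := hind ζ hζ2 (l 0) (l 1) (hl' 0) (hl' 1) h01
  have hl0 : l 0 ≠ 0 := by
    intro h
    have := hI01.transcendental 0
    simp only [Matrix.cons_val_zero, h] at this
    exact this isAlgebraic_zero
  have hc : algebraMap k kb a₂ - algebraMap k kb a₃ * ξ ≠ 0 := by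
    intro h
    have hM : algebraMap k M a₂ - algebraMap k M a₃ * ζ = 0 := by
      have := congrArg (algebraMap kb M) h
      simpa only [map_sub, map_mul, hkM, map_zero] using this
    have hne : (0 : M) ≠ algebraMap k M β / l 0 := (div_ne_zero hβM hl0).symm
    have hI := hind (-ζ) (by rw [neg_sq, hζ2]) 0 (algebraMap k M β / l 0)
      (by
        change (0 : M)′ = _
        rw [map_zero]
        linear_combination -(algebraMap k M β) * hM)
      (by
        change (algebraMap k M β / l 0)′ = _
        have h4 : algebraMap k M (δk β / (4 * β)) = (algebraMap k M β)′ / (4 * algebraMap k M β) := by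
          rw [map_div₀, map_mul, hdβ, map_ofNat]
        have ha2 : algebraMap k M a₂ = algebraMap k M a₃ * ζ := sub_eq_zero.1 hM
        rw [h4, ha2]
        exact inv_sol _ _ _ _ _ hβM hl0 (by rw [hl' 0, h4, ha2]))
      hne
    have := hI.transcendental 0
    simp only [Matrix.cons_val_zero] at this
    exact this isAlgebraic_zero
  refine core (k := k) (kb := kb) (M := M)
    ((algebraMap k kb a₂ + algebraMap k kb a₃ * ξ) * algebraMap k kb β)
    (2 * (algebraMap k kb a₁ * ξ + algebraMap k kb (δk β / (4 * β))))
    (-(algebraMap k kb a₂ - algebraMap k kb a₃ * ξ)) (neg_ne_zero.2 hc) ?_ ?_ (l 0) (l 1) (l 2)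
    ?_ ?_ ?_ h01 h02 h12 (isAlg_of_trdeg (trdeg_le_two (L := L) hcon) _ _ hI01)
  · intro x hx
    apply hnosol x
    change x′ = _
    rw [hx]; ring
  · intro x y hx hy hxy
    refine hind ζ hζ2 x y ?_ ?_ hxy
    · change x′ = _
      rw [hx]
      simp only [map_mul, map_add, map_sub, map_neg, hkM, map_ofNat]
      ring
    · change y′ = _
      rw [hy]
      simp only [map_mul, map_add, map_sub, map_neg, hkM, map_ofNat]
      ring
  all_goals
    rw [hl']
    simp only [map_mul, map_add, map_sub, map_neg, hkM, map_ofNat]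
    ring

end helpers

/-- If the Riccati equation associated to `(Q, d)` has no solution in
the algebraic closure of `k`, and in every differential field extension of `(k(ξ), ′)`
any two distinct solutions are algebraically independent over `k`, then every
differential splitting field of `(Q, d)` has transcendence degree at least `3` over `k`. -/
theorem stmt_8 (k : Type u) [Field k] [CharZero k]
    (δk : k → k) (hδk : IsRingDeriv δk)
    (α β : k) (hα : α ≠ 0) (hβ : β ≠ 0)
    (Q : Type u) [Ring Q] [Algebra k Q]
    (u v : Q) (hu : u * u = algebraMap k Q α) (hv : v * v = algebraMap k Q β)
    (huv : v * u = -(u * v))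
    (bQ : Module.Basis (Fin 4) k Q) (hbQ : ⇑bQ = ![1, u, v, u * v])
    (d : Q → Q) (hd : IsRingDeriv d) (hdk : RestrictsTo δk d)
    (a₁ a₂ a₃ : k) (ϑ : Q)
    (hϑ : ϑ = algebraMap k Q a₁ * u + algebraMap k Q a₂ * v + algebraMap k Q a₃ * (u * v))
    (hdu : d u = algebraMap k Q (δk α / (2 * α)) * u + (u * ϑ - ϑ * u))
    (hdv : d v = algebraMap k Q (δk β / (2 * β)) * v + (v * ϑ - ϑ * v))
    (kb : Type u) [Field kb] [Algebra k kb] [IsAlgClosure k kb]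
    (δkb : kb → kb) (hδkb : IsRingDeriv δkb) (hreskb : RestrictsTo δk δkb)
    (ξ : kb) (hξ : ξ ^ 2 = algebraMap k kb α)
    (hnosol : ∀ x : kb,
      δkb x ≠ (algebraMap k kb a₂ + algebraMap k kb a₃ * ξ) * algebraMap k kb β
        + 2 * (algebraMap k kb a₁ * ξ + algebraMap k kb (δk β / (4 * β))) * x
        - (algebraMap k kb a₂ - algebraMap k kb a₃ * ξ) * x ^ 2)
    (hindep : ∀ (M : Type u) (_ : Field M) (_ : Algebra k M) (δM : M → M),
      IsRingDeriv δM → RestrictsTo δk δM →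
      ∀ ξM : M, ξM ^ 2 = algebraMap k M α →
      ∀ l₁ l₂ : M,
        (δM l₁ = (algebraMap k M a₂ + algebraMap k M a₃ * ξM) * algebraMap k M β
          + 2 * (algebraMap k M a₁ * ξM + algebraMap k M (δk β / (4 * β))) * l₁
          - (algebraMap k M a₂ - algebraMap k M a₃ * ξM) * l₁ ^ 2) →
        (δM l₂ = (algebraMap k M a₂ + algebraMap k M a₃ * ξM) * algebraMap k M β
          + 2 * (algebraMap k M a₁ * ξM + algebraMap k M (δk β / (4 * β))) * l₂
          - (algebraMap k M a₂ - algebraMap k M a₃ * ξM) * l₂ ^ 2) →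
        l₁ ≠ l₂ → AlgebraicIndependent k ![l₁, l₂])
    (L : Type u) [Field L] [Algebra k L]
    (δL : L → L) (hδL : IsRingDeriv δL) (hresL : RestrictsTo δk δL)
    (hsplit : DiffSplits k Q d L δL) :
    TrdegGE k L 3 := by
  exact stmt_8_aux k δk hδk α β hα hβ Q u v hu hv huv bQ hbQ d hd hdk a₁ a₂ a₃ ϑ hϑ hdu hdv kb δkb hδkb hreskb ξ hξ hnosol hindep L δL hδL hresL hsplit
end

section
/- Let k = ℚ(t) with the derivation t′ = 1, let λ be transcendental over k, and let K = k(λ) carry the derivation extending that of k with λ′ = λ² − t. Then for every nonzero rational constant c ∈ ℚˣ, the equation Y′ = −2λY + c has no solution in K. -/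
open scoped TensorProduct

namespace S9
open Polynomial
def NN (p : ℚ[X]) : Prop := 0 ≤ p.leadingCoeff

lemma NN.add {p q : ℚ[X]} (hp : NN p) (hq : NN q) : NN (p+q) := by
  unfold NN at *
  rcases lt_trichotomy p.degree q.degree with h | h | h
  · rwa [leadingCoeff_add_of_degree_lt h]
  · by_cases h0 : p.leadingCoeff + q.leadingCoeff = 0
    · have : p.leadingCoeff = 0 := by linarith
      rw [leadingCoeff_eq_zero] at this
      subst this; simpa using hq
    · rw [leadingCoeff_add_of_degree_eq h h0]; linarith
  · rwa [leadingCoeff_add_of_degree_lt' h]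

lemma NN.left_zero {p q : ℚ[X]} (hp : NN p) (hq : NN q) (h : p + q = 0) : p = 0 := by
  unfold NN at *
  have : q = -p := by linear_combination h
  rw [this, leadingCoeff_neg] at hq
  rw [← leadingCoeff_eq_zero]; linarith

lemma NN.right_zero {p q : ℚ[X]} (hp : NN p) (hq : NN q) (h : p + q = 0) : q = 0 :=
  NN.left_zero hq hp (by rw [add_comm]; exact h)

lemma NN.mul {p q : ℚ[X]} (hp : NN p) (hq : NN q) : NN (p*q) := by
  unfold NN at *
  rw [leadingCoeff_mul]; positivity

lemma NN.deriv {p : ℚ[X]} (hp : NN p) : NN (derivative p) := by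
  unfold NN at *
  by_cases h : p.natDegree = 0
  · rw [eq_C_of_natDegree_eq_zero h]; simp
  · have := natDegree_derivative (p := p)
    unfold leadingCoeff
    rw [this, coeff_derivative, Nat.sub_add_cancel (by omega)]
    unfold leadingCoeff at hp
    positivity

lemma NN.X : NN (X : ℚ[X]) := by simp [NN]
lemma NN.natC (n : ℕ) : NN (n : ℚ[X]) := by
  unfold NN
  rw [← C_eq_natCast, leadingCoeff_C]; positivity

lemma NN.of_mul {p : ℚ[X]} (n : ℕ) (h : NN (((n:ℚ[X]) + 1) * p)) : NN p := by
  unfold NN at *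
  have : ((n:ℚ[X]) + 1) = C ((n:ℚ)+1) := by simp
  rw [this, leadingCoeff_mul, leadingCoeff_C] at h
  exact nonneg_of_mul_nonneg_right h (by positivity)

lemma caseA (d : ℕ) (b : ℚ[X]) (g : ℕ → ℚ[X]) (hb : NN (-b)) (h0 : NN (g 0)) (h00 : g 0 ≠ 0)
    (hd : g (d+1) = 0) (h1 : g 1 = derivative (g 0) - b * g 0)
    (hr : ∀ j, j + 1 ≤ d → ((j+1 : ℕ) + 1 : ℚ[X]) * g (j+2) =
      derivative (g (j+1)) - b * g (j+1) + X * ((d - j : ℕ) : ℚ[X]) * g j) : d = 0 := by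
  have N1 : ∀ p, NN p → NN (derivative p - b * p) := fun p hp => by
    have := hp.deriv.add (hb.mul hp)
    rwa [neg_mul, ← sub_eq_add_neg] at this
  have key : ∀ j, j ≤ d → NN (g j) ∧ NN (g (j+1)) := by
    intro j
    induction j with
    | zero => intro _; exact ⟨h0, by rw [zero_add, h1]; exact N1 _ h0⟩
    | succ j ih =>
      intro hj
      obtain ⟨a1, a2⟩ := ih (by omega)
      refine ⟨a2, NN.of_mul (j+1) ?_⟩
      rw [hr j hj]
      exact (N1 _ a2).add ((NN.X.mul (NN.natC _)).mul a1)
  have cast0 : ∀ n : ℕ, n ≠ 0 → (n : ℚ[X]) ≠ 0 := fun n hn => by exact_mod_cast hn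
  have step : ∀ j, j + 1 ≤ d → g (j+2) = 0 → g j = 0 ∧ derivative (g (j+1)) = 0 := by
    intro j hj hz
    have e := hr j hj
    obtain ⟨a1, a2⟩ := key j (by omega)
    rw [hz, mul_zero] at e
    have z1 := NN.right_zero (N1 _ a2) ((NN.X.mul (NN.natC _)).mul a1) e.symm
    have z2 := NN.left_zero (N1 _ a2) ((NN.X.mul (NN.natC _)).mul a1) e.symm
    refine ⟨?_, ?_⟩
    · have := cast0 (d-j) (by omega)
      simpa [X_ne_zero, this] using z1
    · rw [sub_eq_add_neg, ← neg_mul] at z2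
      exact NN.left_zero a2.deriv (hb.mul a2) z2
  have back : ∀ i j, j + 2 * i = d + 1 → g j = 0 := by
    intro i
    induction i with
    | zero => intro j hj; rw [show j = d + 1 by omega, hd]
    | succ i ih => intro j hj; exact (step j (by omega) (ih (j+2) (by omega))).1
  by_contra hd0
  rcases Nat.even_or_odd' d with ⟨e, he | he⟩
  · have g1 : g 1 = 0 := back e 1 (by omega)
    have g3 : g 3 = 0 := back (e-1) 3 (by omega)
    have g2 := (step 1 (by omega) g3).2
    have r := hr 0 (by omega)
    have g0 : derivative (g 0) = 0 := by
      rw [g1, sub_eq_add_neg, ← neg_mul] at h1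
      exact NN.left_zero h0.deriv (hb.mul h0) h1.symm
    simp only [zero_add, g1, derivative_zero, mul_zero, sub_zero] at r
    have r' := congrArg derivative r
    simp only [derivative_mul, g2, g0, derivative_X, derivative_natCast, derivative_add, derivative_one] at r'
    have := cast0 (d - 0) (by omega)
    simp at r'
    exact r'.elim (fun h => hd0 h) h00
  · exact h00 (back (e+1) 0 (by omega))

lemma pos_sub (b p : ℚ[X]) (hb : 0 < b.leadingCoeff) (hp : 0 < p.leadingCoeff) :
    0 < (b * p - derivative p).leadingCoeff := by
  have hp0 : p ≠ 0 := by rintro rfl; simp at hp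
  have hb0 : b ≠ 0 := by rintro rfl; simp at hb
  have : (derivative p).degree < (b*p).degree :=
    (degree_derivative_lt hp0).trans_le (by rw [mul_comm]; exact degree_le_mul_left _ hb0)
  rw [leadingCoeff_sub_of_degree_lt this, leadingCoeff_mul]; positivity

lemma pos_add {p q : ℚ[X]} (hp : 0 < p.leadingCoeff) (hq : NN q) : 0 < (p+q).leadingCoeff := by
  have h : NN p := hp.le
  refine lt_of_le_of_ne (h.add hq) fun h' => ?_
  have := NN.left_zero h hq (leadingCoeff_eq_zero.1 h'.symm)
  simp [this] at hp

lemma caseB (d : ℕ) (b : ℚ[X]) (g : ℕ → ℚ[X]) (hb : 0 < b.leadingCoeff) (h0 : 0 < (g 0).leadingCoeff)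
    (hd : g (d+1) = 0) (h1 : g 1 = b * g 0 - derivative (g 0))
    (hr : ∀ j, j + 1 ≤ d → ((j+1 : ℕ) + 1 : ℚ[X]) * g (j+2) =
      b * g (j+1) - derivative (g (j+1)) + X * ((d - j : ℕ) : ℚ[X]) * g j) : False := by
  have key : ∀ j, j ≤ d → 0 < (g j).leadingCoeff ∧ 0 < (g (j+1)).leadingCoeff := by
    intro j
    induction j with
    | zero => intro _; exact ⟨h0, by rw [zero_add, h1]; exact pos_sub _ _ hb h0⟩
    | succ j ih =>
      intro hj
      obtain ⟨a1, a2⟩ := ih (by omega)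
      have h := pos_add (pos_sub _ _ hb a2) ((NN.X.mul (NN.natC (d-j))).mul (show NN (g j) from a1.le))
      refine ⟨a2, ?_⟩
      rw [← hr j hj] at h
      have : (((j+1:ℕ):ℚ[X]) + 1) = C (((j+1:ℕ):ℚ)+1) := by simp
      rw [this, leadingCoeff_mul, leadingCoeff_C] at h
      exact pos_of_mul_pos_right h (by positivity)
  have := (key d le_rfl).2
  simp [hd] at this

lemma seq_pos (d : ℕ) (b : ℚ[X]) (g : ℕ → ℚ[X]) (h0 : 0 < (g 0).leadingCoeff)
    (hd : g (d+1) = 0) (h1 : g 1 = derivative (g 0) - b * g 0)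
    (hr : ∀ j, j + 1 ≤ d → ((j+1 : ℕ) + 1 : ℚ[X]) * g (j+2) =
      derivative (g (j+1)) - b * g (j+1) + X * ((d - j : ℕ) : ℚ[X]) * g j) : d = 0 := by
  by_cases hb : NN (-b)
  · exact caseA d b g hb h0.le (by intro h; simp [h] at h0) hd h1 hr
  · exfalso
    have hb' : 0 < b.leadingCoeff := by
      unfold NN at hb; rw [leadingCoeff_neg] at hb; linarith
    refine caseB d b (fun j => (-1)^j * g j) hb' (by simpa using h0) (by simp [hd]) ?_ ?_
    · simp [h1]
    · intro j hj
      have := hr j hj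
      have e : derivative ((-1 : ℚ[X])^(j+1) * g (j+1)) = (-1)^(j+1) * derivative (g (j+1)) := by
        rw [show ((-1 : ℚ[X])^(j+1)) = C ((-1)^(j+1)) by simp, derivative_C_mul]
      simp only [e]
      linear_combination (-1)^j * this

lemma seq_all (d : ℕ) (b : ℚ[X]) (g : ℕ → ℚ[X]) (h0 : g 0 ≠ 0)
    (hd : g (d+1) = 0) (h1 : g 1 = derivative (g 0) - b * g 0)
    (hr : ∀ j, j + 1 ≤ d → ((j+1 : ℕ) + 1 : ℚ[X]) * g (j+2) =
      derivative (g (j+1)) - b * g (j+1) + X * ((d - j : ℕ) : ℚ[X]) * g j) : d = 0 := by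
  rcases lt_trichotomy (g 0).leadingCoeff 0 with h | h | h
  · refine seq_pos d b (fun j => - g j) (by simpa using h) (by simp [hd]) ?_ ?_
    · simp [h1]; ring
    · intro j hj
      simp only [derivative_neg]
      linear_combination - hr j hj
  · exact absurd (leadingCoeff_eq_zero.1 h) h0
  · exact seq_pos d b g h hd h1 hr
end S9

namespace S9
open Polynomial

lemma darboux (Q E L : ℚ[X][X]) (hQ : Q ≠ 0) (hE : ∀ i, E.coeff i = derivative (Q.coeff i))
    (h : E + derivative Q * (X^2 + C X) = L * Q) : Q.natDegree = 0 ∧ L.natDegree ≤ 1 ∧ L.coeff 1 = 0 := by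
  set d := Q.natDegree with hdd
  have hlc : Q.coeff d ≠ 0 := by simpa [hdd] using hQ
  have hz : ∀ i, d < i → Q.coeff i = 0 := fun i hi => coeff_eq_zero_of_natDegree_lt hi
  -- coefficients of the left side
  have c0 : (derivative Q * (X^2 + C X)).coeff 0 = X * Q.coeff 1 := by
    rw [mul_add, coeff_add, mul_comm _ (C (X : ℚ[X])), coeff_C_mul, coeff_mul_X_pow']
    simp [coeff_derivative]
  have c1 : ∀ i : ℕ, (derivative Q * (X^2 + C X)).coeff (i+1) = (i : ℚ[X]) * Q.coeff i +
      X * ((i+2 : ℕ) : ℚ[X]) * Q.coeff (i+2) := by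
    intro i
    rw [mul_add, coeff_add, mul_comm _ (C (X : ℚ[X])), coeff_C_mul, coeff_mul_X_pow']
    rcases i with _ | i
    · simp [coeff_derivative]; ring
    · simp [coeff_derivative]; ring
  have hL : L.natDegree ≤ 1 := by
    by_cases hL0 : L = 0
    · simp [hL0]
    have h1 : (L*Q).natDegree ≤ d + 1 := by
      rw [← h, natDegree_le_iff_coeff_eq_zero]
      intro N hN
      obtain ⟨N, rfl⟩ : ∃ M, N = M + 1 := ⟨N-1, by omega⟩
      rw [coeff_add, hE, c1, hz _ (by omega), hz N (by omega), hz _ (by omega)]; simp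
    rw [natDegree_mul hL0 hQ] at h1
    omega
  have hLe := eq_X_add_C_of_natDegree_le_one hL
  set b := L.coeff 0
  set l := L.coeff 1
  have m0 : (L*Q).coeff 0 = b * Q.coeff 0 := by
    rw [mul_coeff_zero]
  have m1 : ∀ i, (L*Q).coeff (i+1) = l * Q.coeff i + b * Q.coeff (i+1) := by
    intro i
    rw [hLe, add_mul, coeff_add, coeff_C_mul, mul_assoc, coeff_C_mul, coeff_X_mul]
  have hl : l = (d : ℚ[X]) := by
    have := m1 d
    rw [← h, coeff_add, hE, c1, hz (d+1) (by omega), hz (d+2) (by omega)] at this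
    simp only [derivative_zero, mul_zero, zero_add, add_zero] at this
    exact (mul_right_cancel₀ hlc this).symm
  have E1 : ∀ i : ℕ, derivative (Q.coeff (i+1)) + ((i : ℚ[X]) * Q.coeff i +
      X * ((i+2 : ℕ) : ℚ[X]) * Q.coeff (i+2)) = (d : ℚ[X]) * Q.coeff i + b * Q.coeff (i+1) := by
    intro i
    rw [← hl, ← m1, ← h, coeff_add, hE, c1]
  have E0 : derivative (Q.coeff 0) + X * Q.coeff 1 = b * Q.coeff 0 := by
    rw [← m0, ← h, coeff_add, hE, c0]
  have hd0 : d = 0 := by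
    refine seq_all d b (fun j => if j ≤ d then Q.coeff (d - j) else 0) (by simpa using hlc) (by simp) ?_ ?_
    · simp only [Nat.zero_le, if_true, Nat.sub_zero]
      rcases hd : d with _ | e
      · have := E0
        rw [hz 1 (by omega)] at this
        simp
        linear_combination -this
      · have := E1 e
        rw [hz (e+2) (by omega), hd] at this
        push_cast at this
        simp
        linear_combination -this
    · intro j hj
      simp only [show j ≤ d by omega, hj, if_true]
      by_cases hj2 : j + 2 ≤ d
      · obtain ⟨i, hi⟩ : ∃ i, d = i + (j + 2) := ⟨d - (j+2), by omega⟩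
        have := E1 i
        simp only [hj2, if_true]
        rw [show d - (j+2) = i by omega, show d - (j+1) = i+1 by omega, show d - j = i + 2 by omega]
        rw [hi] at this
        push_cast at this ⊢
        linear_combination -this
      · have hdj : d = j + 1 := by omega
        simp only [hj2, if_false]
        rw [show d - (j+1) = 0 by omega, show d - j = 1 by omega]
        push_cast
        linear_combination -E0
  exact ⟨hd0, hL, by rw [hl, hd0]; simp⟩

set_option maxHeartbeats 1000000 in
lemma core {K : Type*} [Field K] (φ : ℚ[X][X] →+* K) (hφ : Function.Injective φ)
    (δ : K → K) (ha : ∀ x y, δ (x + y) = δ x + δ y) (hm : ∀ x y, δ (x * y) = δ x * y + x * δ y)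
    (hs : δ (φ (C X)) = 1) (hX : δ (φ X) = φ (X^2 + C X)) (hq : ∀ q : ℚ, δ (φ (C (C q))) = 0)
    (c : ℚ) (hc : c ≠ 0) (y : K) (P Q : ℚ[X][X]) (hQ : Q ≠ 0) (hy : y * φ Q = φ P)
    (h : δ y = φ (-2 * X) * y + φ (C (C c))) : False := by
  have hin : ∀ p : ℚ[X], δ (φ (C p)) = φ (C (derivative p)) := by
    intro p
    induction p using Polynomial.induction_on with
    | C a => simp [hq]
    | add p q hp hq => simp [ha, hp, hq]
    | monomial n a ih =>
      have : (C a * X^(n+1) : ℚ[X]) = (C a * X^n) * X := by ring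
      rw [this, C_mul, map_mul, hm, ih, hs, derivative_mul (f := C a * X^n)]
      simp
  have hD : ∀ Q : ℚ[X][X], ∃ E : ℚ[X][X], (∀ i, E.coeff i = derivative (Q.coeff i)) ∧
      δ (φ Q) = φ (E + derivative Q * (X^2 + C X)) := by
    intro Q
    induction Q using Polynomial.induction_on with
    | C a =>
      refine ⟨C (derivative a), fun i => ?_, by simp [hin]⟩
      simp only [coeff_C]; split_ifs <;> simp
    | add p q hp hq =>
      obtain ⟨E, h1, h2⟩ := hp
      obtain ⟨F, h3, h4⟩ := hq
      refine ⟨E + F, fun i => by simp [h1, h3], ?_⟩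
      rw [map_add, ha, h2, h4, ← map_add, derivative_add]; congr 1; ring
    | monomial n a ih =>
      obtain ⟨E, h1, h2⟩ := ih
      refine ⟨E * X, fun i => ?_, ?_⟩
      · rcases i with _ | i
        · simp [coeff_X_pow]
        · rw [coeff_mul_X, h1]; simp [coeff_X_pow]
      · have : (C a * X^(n+1) : ℚ[X][X]) = (C a * X^n) * X := by ring
        rw [this, map_mul, hm, h2, hX, ← map_mul, ← map_mul, ← map_add, derivative_mul (f := C a * X^n), derivative_X]
        congr 1; ring
  obtain ⟨P', Q', r, hrel, rfl, rfl⟩ := UniqueFactorizationMonoid.exists_reduced_factors' P Q hQ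
  have hr : r ≠ 0 := left_ne_zero_of_mul hQ
  have hQ' : Q' ≠ 0 := right_ne_zero_of_mul hQ
  have hφr : φ r ≠ 0 := by rwa [Ne, map_eq_zero_iff φ hφ]
  have hy' : y * φ Q' = φ P' := by
    rw [map_mul, map_mul] at hy
    apply mul_left_cancel₀ hφr; rw [← hy]; ring
  obtain ⟨E, hE1, hE2⟩ := hD P'
  obtain ⟨F, hF1, hF2⟩ := hD Q'
  have e1 : δ y * φ Q' + y * δ (φ Q') = δ (φ P') := by rw [← hm, hy']
  set DP := E + derivative P' * (X^2 + C X) with hDP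
  set DQ := F + derivative Q' * (X^2 + C X) with hDQ
  have e2 : (-2 * X * P' + C (C c) * Q') * Q' + P' * DQ = DP * Q' := by
    apply hφ
    rw [hE2, hF2, h] at e1
    rw [map_add, map_mul, map_add, map_mul (f := φ) (-2 * X), map_mul (f := φ) (C (C c)), map_mul (f := φ) P', map_mul (f := φ) DP, ← hy']
    linear_combination φ Q' * e1
  have hdvd : Q' ∣ DQ := by
    have : Q' ∣ P' * DQ := ⟨DP - (-2 * X * P' + C (C c) * Q'), by linear_combination e2⟩
    exact hrel.symm.dvd_of_dvd_mul_left this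
  obtain ⟨L, hL⟩ := hdvd
  obtain ⟨d0, l1, l2⟩ := darboux Q' F L hQ' hF1 (by rw [← hDQ, hL]; ring)
  obtain ⟨q, rfl⟩ : ∃ q, Q' = C q := ⟨_, eq_C_of_natDegree_eq_zero d0⟩
  obtain ⟨b, rfl⟩ : ∃ b, L = C b := ⟨L.coeff 0, by
    have := eq_X_add_C_of_natDegree_le_one l1
    rw [l2] at this; simpa using this⟩
  have e3 : -2 * X * P' + C (C c) * C q + C b * P' = DP := by
    apply mul_right_cancel₀ hQ'
    rw [hL] at e2
    linear_combination e2
  have hP : P' ≠ 0 := by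
    rintro rfl
    have : DP = 0 := by
      rw [hDP, derivative_zero, zero_mul, add_zero]; ext1 i; simp [hE1]
    rw [this] at e3
    have hq0 : q ≠ 0 := by rintro rfl; simp at hQ'
    simp [hc, hq0] at e3
  have hlc : P'.coeff P'.natDegree ≠ 0 := by simpa using hP
  have e4 := congrArg (fun p => coeff p (P'.natDegree + 1)) e3
  have z1 : P'.coeff (P'.natDegree + 1) = 0 := coeff_eq_zero_of_natDegree_lt (by omega)
  have z2 : P'.coeff (P'.natDegree + 1 + 1) = 0 := coeff_eq_zero_of_natDegree_lt (by omega)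
  have z3 : (derivative P' * X^2).coeff (P'.natDegree + 1) = (P'.natDegree : ℚ[X]) * P'.coeff P'.natDegree := by
    rw [coeff_mul_X_pow']
    rcases hn : P'.natDegree with _ | n
    · simp
    · simp [coeff_derivative]; ring
  have z4 : (-2 * X * P' : ℚ[X][X]) = C (-2) * (X * P') := by
    rw [mul_assoc, C_neg, show (C (2 : ℚ[X])) = 2 from map_ofNat C 2]
  simp only [hDP, z4, coeff_add, mul_add, z3, coeff_C_mul, coeff_X_mul, z1, hE1, coeff_mul_C, coeff_derivative, z2, coeff_C_succ] at e4
  have e5 : ((P'.natDegree + 2 : ℕ) : ℚ[X]) * P'.coeff P'.natDegree = 0 := by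
    push_cast
    simp only [mul_zero, zero_mul, derivative_zero, add_zero, zero_add] at e4
    linear_combination -e4
  rcases mul_eq_zero.1 e5 with h' | h'
  · rw [Nat.cast_eq_zero] at h'; omega
  · exact hlc h'

lemma deriv_rat {k : Type*} [Field k] [CharZero k] (δ : k → k) (ha : ∀ x y, δ (x + y) = δ x + δ y)
    (hm : ∀ x y, δ (x * y) = δ x * y + x * δ y) (q : ℚ) : δ (q : k) = 0 := by
  have h1 : δ 1 = 0 := by
    have := hm 1 1
    simp only [mul_one, one_mul] at this
    linear_combination -this
  have := map_rat_smul (AddMonoidHom.mk' δ ha) q (1 : k)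
  simpa [h1, Rat.smul_def] using this

end S9

theorem stmt_9
    (δk : RatFunc ℚ → RatFunc ℚ) (hδk : IsRingDeriv δk) (hX : δk RatFunc.X = 1)
    (K : Type*) [Field K] [Algebra (RatFunc ℚ) K]
    (lam : K) (htrans : Transcendental (RatFunc ℚ) lam)
    (hgen : IntermediateField.adjoin (RatFunc ℚ) {lam} = ⊤)
    (δK : K → K) (hδK : IsRingDeriv δK) (hres : RestrictsTo δk δK)
    (hlam : δK lam = lam ^ 2 - algebraMap (RatFunc ℚ) K RatFunc.X)
    (c : ℚ) (hc : c ≠ 0) (y : K) :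
    δK y ≠ -2 * lam * y + algebraMap (RatFunc ℚ) K (RatFunc.C c) := by
  intro heq
  have ha := hδK.map_add
  have hm := hδK.leibniz
  have : CharZero K := charZero_of_injective_algebraMap (algebraMap (RatFunc ℚ) K).injective
  have hneg : ∀ x, δK (-x) = - δK x := fun x => (AddMonoidHom.mk' δK ha).map_neg x
  let ι : Polynomial ℚ →+* RatFunc ℚ := algebraMap _ _
  have hι : Function.Injective ι := IsFractionRing.injective _ _
  let φ0 : Polynomial (Polynomial ℚ) →+* K :=
    ((Polynomial.aeval lam : Polynomial (RatFunc ℚ) →ₐ[RatFunc ℚ] K) : Polynomial (RatFunc ℚ) →+* K).comp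
      (Polynomial.mapRingHom ι)
  have hφ0 : Function.Injective φ0 :=
    (transcendental_iff_injective.1 htrans).comp (Polynomial.map_injective ι hι)
  let σi : Polynomial ℚ →+* Polynomial ℚ := Polynomial.eval₂RingHom Polynomial.C (-Polynomial.X)
  let σ : Polynomial (Polynomial ℚ) →+* Polynomial (Polynomial ℚ) :=
    Polynomial.eval₂RingHom (Polynomial.C.comp σi) (-Polynomial.X)
  have hσ : ∀ p, σ (σ p) = p := by
    have : σ.comp σ = RingHom.id _ := by
      ext <;> simp [σ, σi]
    intro p; exact congrArg (fun f : _ →+* _ => f p) this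
  have hσinj : Function.Injective σ := Function.LeftInverse.injective hσ
  have hCC : ∀ q : ℚ, φ0 (σ (Polynomial.C (Polynomial.C q))) = algebraMap (RatFunc ℚ) K (RatFunc.C q) := by
    intro q; simp [φ0, σ, σi, ι]
  have hCX : φ0 (σ (Polynomial.C Polynomial.X)) = - algebraMap (RatFunc ℚ) K RatFunc.X := by
    simp [φ0, σ, σi, ι]
  have hXX : φ0 (σ Polynomial.X) = - lam := by
    simp [φ0, σ, σi, ι]
  have clear : ∀ r : Polynomial (RatFunc ℚ), ∃ (b : Polynomial ℚ) (p : Polynomial (Polynomial ℚ)), b ≠ 0 ∧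
      φ0 p = algebraMap (RatFunc ℚ) K (ι b) * Polynomial.aeval lam r := by
    intro r
    obtain ⟨b, hbm, hb⟩ := IsLocalization.integerNormalization_spec (nonZeroDivisors (Polynomial ℚ)) r
    refine ⟨b, IsLocalization.integerNormalization (nonZeroDivisors (Polynomial ℚ)) r, nonZeroDivisors.ne_zero hbm, ?_⟩
    · change Polynomial.aeval lam (Polynomial.map (algebraMap _ _) _) = _
      rw [hb, ← algebraMap_smul (RatFunc ℚ), map_smul, Algebra.smul_def]
  have hymem : y ∈ IntermediateField.adjoin (RatFunc ℚ) {lam} := by rw [hgen]; trivial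
  obtain ⟨r, s, hrs⟩ := (IntermediateField.mem_adjoin_simple_iff (RatFunc ℚ) y).1 hymem
  have hPQ : ∃ P Q : Polynomial (Polynomial ℚ), Q ≠ 0 ∧ y * φ0 Q = φ0 P := by
    by_cases hs : Polynomial.aeval lam s = 0
    · exact ⟨0, 1, one_ne_zero, by simp [hrs, hs]⟩
    obtain ⟨b1, p1, hb1, h1⟩ := clear r
    obtain ⟨b2, p2, hb2, h2⟩ := clear s
    have hn : ∀ b : Polynomial ℚ, b ≠ 0 → algebraMap (RatFunc ℚ) K (ι b) ≠ 0 := by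
      intro b hb
      rw [Ne, map_eq_zero, map_eq_zero_iff ι hι]; exact hb
    have hC : ∀ b : Polynomial ℚ, φ0 (Polynomial.C b) = algebraMap (RatFunc ℚ) K (ι b) := by
      intro b; simp [φ0]
    have hp2 : p2 ≠ 0 := by
      rintro rfl
      rw [map_zero] at h2
      exact mul_ne_zero (hn _ hb2) hs h2.symm
    refine ⟨Polynomial.C b2 * p1, Polynomial.C b1 * p2, mul_ne_zero (by simpa using hb1) hp2, ?_⟩
    rw [map_mul, map_mul, hC, hC, h1, h2, hrs]
    field_simp
  obtain ⟨P, Q, hQ, hPQ⟩ := hPQ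
  refine S9.core (φ0.comp σ) (hφ0.comp hσinj) (fun x => - δK x) (fun x y => by rw [ha]; ring)
    (fun x y => by rw [hm]; ring) ?_ ?_ ?_ (-c) (neg_ne_zero.2 hc) y (σ P) (σ Q)
    (by rwa [Ne, map_eq_zero_iff σ hσinj]) (by simpa [hσ] using hPQ) ?_
  · simp only [RingHom.comp_apply]
    rw [hCX, hneg, hres, hX]; simp
  · simp only [RingHom.comp_apply, map_add, map_pow]
    rw [hCX, hXX, hneg, hlam]; ring
  · intro q
    simp only [RingHom.comp_apply]
    rw [hCC, hres]
    have := S9.deriv_rat δk hδk.map_add hδk.leibniz q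
    have e : RatFunc.C q = ((q : ℚ) : RatFunc ℚ) := eq_ratCast (RatFunc.C) q
    rw [e, this]; simp
  · simp only [RingHom.comp_apply, map_mul, map_neg, map_ofNat]
    rw [hXX, hCC, heq]; ring
end

section
/- Let k = ℚ(t) with the derivation t′ = 1, let λ be transcendental over k, and let K = k(λ) carry the derivation extending that of k with λ′ = λ² − t. Then λ is the unique solution of X′ = X² − t in the algebraic closure of K (equipped with the unique extension of the derivation): every σ algebraic over K with σ′ = σ² − t equals λ. -/
open scoped TensorProduct

open Polynomial

namespace Airy


theorem drv_zero {A : Type*} [Ring A] {d : A → A} (h : IsRingDeriv d) : d 0 = 0 := by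
  have := h.map_add 0 0
  simpa using this

theorem drv_one {A : Type*} [Ring A] {d : A → A} (h : IsRingDeriv d) : d 1 = 0 := by
  have := h.leibniz 1 1
  simpa using this

theorem drv_neg {A : Type*} [Ring A] {d : A → A} (h : IsRingDeriv d) (x : A) : d (-x) = - d x := by
  have := h.map_add x (-x)
  rw [add_neg_cancel, drv_zero h] at this
  exact (neg_eq_of_add_eq_zero_right this.symm).symm

theorem drv_sub {A : Type*} [Ring A] {d : A → A} (h : IsRingDeriv d) (x y : A) :
    d (x - y) = d x - d y := by
  rw [sub_eq_add_neg, h.map_add, drv_neg h, sub_eq_add_neg]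

theorem drv_sum {A : Type*} [Ring A] {d : A → A} (h : IsRingDeriv d) {ι : Type*} (s : Finset ι)
    (f : ι → A) : d (∑ i ∈ s, f i) = ∑ i ∈ s, d (f i) :=
  map_sum (AddMonoidHom.mk' d h.map_add) f s

theorem drv_nat {A : Type*} [Ring A] {d : A → A} (h : IsRingDeriv d) (n : ℕ) : d (n : A) = 0 := by
  induction n with
  | zero => simpa using drv_zero h
  | succ n ih => rw [Nat.cast_succ, h.map_add, ih, drv_one h, add_zero]

theorem drv_pow {A : Type*} [CommRing A] {d : A → A} (h : IsRingDeriv d) (x y : A)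
    (hx : d x = y * x) (n : ℕ) :
    d (x ^ n) = n * y * x ^ n := by
  induction n with
  | zero => simpa using drv_one h
  | succ n ih => rw [pow_succ, h.leibniz, ih, hx]; push_cast; ring

/-- a derivation applied to coefficients -/
noncomputable def mc {R : Type*} [CommRing R] (d : R → R) (G : R[X]) : R[X] :=
  ∑ i ∈ G.support, monomial i (d (G.coeff i))




theorem coeff_mc {R : Type*} [CommRing R] {d : R → R} (hd : IsRingDeriv d) (G : R[X]) (n : ℕ) : (mc d G).coeff n = d (G.coeff n) := by
  classical
  simp only [mc, finsetSum_coeff, coeff_monomial]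
  rw [Finset.sum_ite_eq']
  split_ifs with h
  · rfl
  · rw [notMem_support_iff.mp h, drv_zero hd]

theorem mc_deriv {R : Type*} [CommRing R] {d : R → R} (hd : IsRingDeriv d) : IsRingDeriv (mc d) where
  map_add x y := by ext n; simp [coeff_mc hd, hd.map_add]
  leibniz x y := by
    ext n
    simp [coeff_mc hd, coeff_mul, drv_sum hd, hd.leibniz, Finset.sum_add_distrib]


/-- derivation on polynomials with `X ↦ v` -/
noncomputable def DD {R : Type*} [CommRing R] (d : R → R) (v : R[X]) (G : R[X]) : R[X] :=
  mc d G + v * derivative G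

theorem DD_deriv {R : Type*} [CommRing R] {d : R → R} (hd : IsRingDeriv d) (v : R[X]) :
    IsRingDeriv (DD d v) where
  map_add x y := by simp only [DD, (mc_deriv hd).map_add, derivative_add]; ring
  leibniz x y := by simp only [DD, (mc_deriv hd).leibniz, derivative_mul]; ring

theorem DD_C {R : Type*} [CommRing R] {d : R → R} (hd : IsRingDeriv d) (v : R[X]) (a : R) :
    DD d v (C a) = C (d a) := by
  have : mc d (C a) = C (d a) := by
    ext n
    rw [coeff_mc hd, coeff_C, coeff_C]
    split_ifs
    · rfl
    · exact drv_zero hd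
  simp [DD, this]

theorem DD_X {R : Type*} [CommRing R] {d : R → R} (hd : IsRingDeriv d) (v : R[X]) :
    DD d v X = v := by
  have : mc d (X : R[X]) = 0 := by
    ext n
    rw [coeff_mc hd, coeff_X]
    split_ifs
    · simpa using drv_one hd
    · simpa using drv_zero hd
  simp [DD, this]

theorem DD_chain {R S : Type*} [CommRing R] [CommRing S] {d : R → R} (hd : IsRingDeriv d)
    (v : R[X]) (f : R →+* S) {dS : S → S} (hS : IsRingDeriv dS) (hf : ∀ r, dS (f r) = f (d r))
    (x : S) (hx : dS x = eval₂ f x v) (G : R[X]) :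
    dS (eval₂ f x G) = eval₂ f x (DD d v G) := by
  induction G using Polynomial.induction_on' with
  | add p q hp hq => rw [eval₂_add, hS.map_add, hp, hq, (DD_deriv hd v).map_add, eval₂_add]
  | monomial n a =>
    induction n with
    | zero => rw [monomial_zero_left, DD_C hd, eval₂_C, eval₂_C, hf]
    | succ n ih =>
      rw [← monomial_mul_X, (DD_deriv hd v).leibniz, DD_X hd, eval₂_mul, hS.leibniz, ih]
      simp [hx]

theorem coeff_DD_top {R : Type*} [CommRing R] {d : R → R} (hd : IsRingDeriv d) (t : R) (F : R[X])
    (k : ℕ) (hk : F.natDegree ≤ k) :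
    (DD d (X ^ 2 - C t) F).coeff (k + 1) = k * F.coeff k := by
  have h1 : F.coeff (k + 1) = 0 := coeff_eq_zero_of_natDegree_lt (by omega)
  have h2 : F.coeff (k + 1 + 1) = 0 := coeff_eq_zero_of_natDegree_lt (by omega)
  rw [DD, coeff_add, coeff_mc hd, h1, drv_zero hd, sub_mul, coeff_sub, coeff_C_mul,
    coeff_derivative, h2, coeff_X_pow_mul']
  rcases k with _ | k
  · simp
  · simp [coeff_derivative, mul_comm]

theorem cofactor {R : Type*} [CommRing R] [IsDomain R] {d : R → R} (hd : IsRingDeriv d)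
    (t : R) (F g : R[X]) (hF : F ≠ 0) (h : DD d (X ^ 2 - C t) F = g * F) :
    ∃ b, g = C (F.natDegree : R) * X + C b := by
  have hz : ∀ k, F.natDegree < k → (g * F).coeff (k + 1) = 0 := fun k hk => by
    rw [← h, coeff_DD_top hd t F k hk.le, coeff_eq_zero_of_natDegree_lt hk, mul_zero]
  have hdeg : g.natDegree ≤ 1 := by
    by_contra hc
    push Not at hc
    have := hz (g.natDegree + F.natDegree - 1) (by omega)
    rw [show g.natDegree + F.natDegree - 1 + 1 = g.natDegree + F.natDegree by omega,
      coeff_mul_degree_add_degree] at this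
    have hg : g ≠ 0 := by rintro rfl; simp at hc
    simp [hF, hg] at this
  obtain ⟨a, b, rfl⟩ := exists_eq_X_add_C_of_natDegree_le_one hdeg
  refine ⟨b, ?_⟩
  have h3 := coeff_DD_top hd t F F.natDegree le_rfl
  rw [h, add_mul, mul_assoc, coeff_add, coeff_C_mul, coeff_C_mul, coeff_X_mul,
    coeff_eq_zero_of_natDegree_lt (Nat.lt_succ_self F.natDegree), mul_zero, add_zero] at h3
  rw [mul_right_cancel₀ (by simpa using hF) h3]

theorem split_off {L : Type*} [Field L] {d : L → L} (hd : IsRingDeriv d) (t α : L)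
    (hα : d α = α ^ 2 - t) (H : L[X]) (hH : H ≠ 0) (p q : L)
    (h : DD d (X ^ 2 - C t) H = (C p * X + C q) * H) :
    ∃ (i : ℕ) (H1 : L[X]) (c : L), H = (X - C α) ^ i * H1 ∧ H1 ≠ 0 ∧ c ≠ 0 ∧
      DD d (X ^ 2 - C t) H1 = (C (p - i) * X + C (q - i * α)) * H1 ∧
      d c = ((p - 2 * i) * α + q) * c := by
  obtain ⟨H1, hH1, hnd⟩ := exists_eq_pow_rootMultiplicity_mul_and_not_dvd H hH α
  set i := H.rootMultiplicity α
  have hD := DD_deriv hd (X ^ 2 - C t)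
  have hlin : DD d (X ^ 2 - C t) (X - C α) = (X + C α) * (X - C α) := by
    rw [drv_sub hD, DD_X hd, DD_C hd, hα]; simp only [C_sub, C_pow]; ring
  have hpow := drv_pow hD _ _ hlin i
  have hne : (X - C α) ^ i ≠ 0 := pow_ne_zero _ (X_sub_C_ne_zero α)
  have hcof : DD d (X ^ 2 - C t) H1 = (C (p - i) * X + C (q - i * α)) * H1 := by
    rw [hH1, hD.leibniz, hpow] at h
    apply mul_left_cancel₀ hne
    simp only [C_sub, C_mul, map_natCast]
    linear_combination h
  refine ⟨i, H1, H1.eval α, hH1, fun h0 => hnd (by simp [h0]), fun h0 => hnd (dvd_iff_isRoot.mpr h0),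
    hcof, ?_⟩
  have := DD_chain hd (X ^ 2 - C t) (RingHom.id L) hd (fun _ => rfl) α (by simp [hα]) H1
  rw [hcof] at this
  simp only [eval₂_id, eval_mul, eval_add, eval_C, eval_X] at this
  rw [this]
  ring

/-- Laurent series in `s`, `t = s^(-2)` -/
abbrev LL := HahnSeries ℤ ℚ

/-- Euler operator -/
noncomputable def th (x : LL) : LL where
  coeff n := n * x.coeff n
  isPWO_support' := x.isPWO_support.mono (fun n hn => by
    intro h0
    exact hn (by simp [h0]))

theorem th_supp (x : LL) : (th x).support ⊆ x.support := fun n hn => by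
  intro h0
  exact hn (by simp [th, h0])

theorem th_deriv : IsRingDeriv th where
  map_add x y := by ext n; simp [th, mul_add]
  leibniz x y := by
    ext n
    rw [HahnSeries.coeff_add,
      HahnSeries.coeff_mul_left' (x := th x) x.isPWO_support (th_supp x),
      HahnSeries.coeff_mul_right' (y := th y) y.isPWO_support (th_supp y)]
    simp only [th, HahnSeries.coeff_mul, Finset.mul_sum]
    rw [← Finset.sum_add_distrib]
    apply Finset.sum_congr rfl
    rintro ⟨i, j⟩ hij
    have : i + j = n := by simpa using (Finset.mem_antidiagonal.mp hij).2.2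
    subst this
    push_cast
    ring

/-- d/dt on Laurent series -/
noncomputable def dL (x : LL) : LL := HahnSeries.single 2 (-1/2) * th x

theorem dL_deriv : IsRingDeriv dL where
  map_add x y := by simp [dL, th_deriv.map_add, mul_add]
  leibniz x y := by simp only [dL, th_deriv.leibniz]; ring

theorem coeff_dL (x : LL) (k : ℤ) : (dL x).coeff k = -(k - 2) / 2 * x.coeff (k - 2) := by
  rw [dL, HahnSeries.coeff_single_mul]
  simp only [th]
  push_cast
  ring

theorem ord_lemma (c e : LL) (hc : c ≠ 0) (h : dL c = e * c) :
    (∀ k < 2, e.coeff k = 0) ∧ e.coeff 2 = - (c.order : ℚ) / 2 := by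
  have h1 : ∀ k < 2, e.coeff k = 0 := by
    intro k hk
    by_cases he : e = 0
    · simp [he]
    apply HahnSeries.coeff_eq_zero_of_lt_order
    by_contra hlt
    push Not at hlt
    have := HahnSeries.coeff_mul_order_add_order e c
    rw [← h, coeff_dL, HahnSeries.coeff_eq_zero_of_lt_order (x := c) (by omega)] at this
    simp [he, hc] at this
  refine ⟨h1, ?_⟩
  have h2 : (e * c).coeff (2 + c.order) = e.coeff 2 * c.leadingCoeff := by
    by_cases he : e = 0
    · simp [he]
    have h3 : 2 ≤ e.order := by
      by_contra hlt
      push Not at hlt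
      exact he (HahnSeries.coeff_order_eq_zero.mp (h1 _ hlt))
    rcases h3.eq_or_lt with h3 | h3
    · rw [h3, HahnSeries.coeff_mul_order_add_order, HahnSeries.leadingCoeff_eq (x := e)]
    · rw [HahnSeries.coeff_eq_zero_of_lt_order, HahnSeries.coeff_eq_zero_of_lt_order h3, zero_mul]
      rw [HahnSeries.order_mul he hc]
      omega
  rw [← h, coeff_dL, add_sub_cancel_left, ← HahnSeries.leadingCoeff_eq] at h2
  have := mul_right_cancel₀ (HahnSeries.leadingCoeff_ne_zero.mpr hc) h2
  rw [← this]
  push_cast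
  ring

/-- coefficients of the formal Riccati solution -/
noncomputable def bco (ε : ℚ) : ℕ → ℚ
  | 0 => ε
  | N + 1 => (ε / 2) * ((if 2 ≤ N then (3 - (N : ℚ)) / 2 * bco ε (N - 2) else 0)
      - ∑ i : Fin N, bco ε (i + 1) * bco ε (N - i))
decreasing_by all_goals omega

theorem bco_eq (ε : ℚ) (hε : ε ^ 2 = 1) :
    (PowerSeries.mk (bco ε)) ^ 2 = 1 + PowerSeries.C (1/2) * PowerSeries.X ^ 3 * (PowerSeries.mk (bco ε))
      - PowerSeries.C (1/2) * PowerSeries.X ^ 3 *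
        (PowerSeries.X * PowerSeries.derivative ℚ (PowerSeries.mk (bco ε))) := by
  ext n
  have hxd : ∀ m, PowerSeries.coeff m (PowerSeries.X * PowerSeries.derivative ℚ (PowerSeries.mk (bco ε)))
      = m * bco ε m := by
    intro m
    rcases m with _ | m
    · simp
    · rw [PowerSeries.coeff_succ_X_mul, PowerSeries.coeff_derivative]
      simp [mul_comm]
  rw [sq, PowerSeries.coeff_mul]
  simp only [map_sub, map_add, mul_assoc, PowerSeries.coeff_C_mul, PowerSeries.coeff_X_pow_mul', hxd,
    PowerSeries.coeff_mk, PowerSeries.coeff_one]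
  rw [Finset.Nat.sum_antidiagonal_eq_sum_range_succ_mk]
  rcases n with _ | N
  · simp [bco, ← sq, hε]
  · rw [Finset.sum_range_succ, Finset.sum_range_succ']
    simp only [Nat.sub_self, Nat.sub_zero, Nat.add_sub_add_right]
    have hs : bco ε (N + 1) = (ε / 2) * ((if 2 ≤ N then (3 - (N : ℚ)) / 2 * bco ε (N - 2) else 0)
      - ∑ i ∈ Finset.range N, bco ε (i + 1) * bco ε (N - i)) := by
      rw [bco, Finset.sum_range]
    have h0 : bco ε 0 = ε := by rw [bco]
    rw [h0]
    by_cases hN : 2 ≤ N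
    · obtain ⟨M, rfl⟩ := Nat.exists_eq_add_of_le hN
      rw [if_pos hN] at hs
      simp only [show (3 ≤ 2 + M + 1) by omega, show 2 + M + 1 - 3 = M by omega,
        show 2 + M - 2 = M by omega, if_true, if_neg (show ¬ (2 + M + 1 = 0) by omega)] at hs ⊢
      push_cast at hs ⊢
      linear_combination (2 * ε) * hs +
        (((3 - (2 + (M : ℚ))) / 2 * bco ε M) - ∑ i ∈ Finset.range (2 + M), bco ε (i + 1) * bco ε (2 + M - i)) * hε
    · rw [if_neg hN] at hs
      simp only [show ¬ (3 ≤ N + 1) by omega, if_false, if_neg (show ¬ (N + 1 = 0) by omega)]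
      linear_combination (2 * ε) * hs -
        (∑ i ∈ Finset.range N, bco ε (i + 1) * bco ε (N - i)) * hε

/-- t as Laurent series -/
noncomputable abbrev tL : LL := HahnSeries.single (-2) 1

theorem exists_alpha (ε : ℚ) (hε : ε ^ 2 = 1) :
    ∃ α : LL, dL α = α ^ 2 - tL ∧ α.coeff (-1) = ε ∧ α.coeff 2 = 1 / 4 := by
  have hε0 : ε ≠ 0 := by rintro rfl; norm_num at hε
  set β : PowerSeries ℚ := PowerSeries.mk (bco ε) with hβ
  have hth : th (HahnSeries.ofPowerSeries ℤ ℚ β) =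
      HahnSeries.ofPowerSeries ℤ ℚ (PowerSeries.X * PowerSeries.derivative ℚ β) := by
    ext n
    simp only [th]
    rw [PowerSeries.coeff_coe, PowerSeries.coeff_coe]
    split_ifs with h
    · simp
    · obtain ⟨m, rfl⟩ := Int.eq_ofNat_of_zero_le (not_lt.mp h)
      simp only [Int.natAbs_natCast]
      rcases m with _ | m
      · simp
      · rw [PowerSeries.coeff_succ_X_mul, PowerSeries.coeff_derivative]
        simp [mul_comm]
  have heq := congrArg (HahnSeries.ofPowerSeries ℤ ℚ) (bco_eq ε hε)
  rw [← hβ] at heq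
  simp only [map_sub, map_add, map_mul (HahnSeries.ofPowerSeries ℤ ℚ), map_pow, map_one, HahnSeries.ofPowerSeries_C, HahnSeries.ofPowerSeries_X]
    at heq
  rw [← HahnSeries.ofPowerSeries_X, ← map_mul, ← hth] at heq
  set B := HahnSeries.ofPowerSeries ℤ ℚ β
  have h1 : th (HahnSeries.single (-1) 1) = - HahnSeries.single (-1) 1 := by
    ext n
    simp only [th, HahnSeries.coeff_neg, HahnSeries.coeff_single]
    split_ifs with h <;> simp [h]
  refine ⟨HahnSeries.single (-1) 1 * B, ?_, ?_, ?_⟩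
  · rw [dL, th_deriv.leibniz, h1, mul_pow, heq]
    have e3 : (HahnSeries.ofPowerSeries ℤ ℚ PowerSeries.X) = HahnSeries.single (1 : ℤ) (1 : ℚ) :=
      HahnSeries.ofPowerSeries_X
    simp only [HahnSeries.C_apply, HahnSeries.single_pow, e3, mul_add, mul_sub, ← mul_assoc,
      HahnSeries.single_mul_single, neg_mul, mul_neg, tL]
    norm_num
    ring
  · rw [HahnSeries.coeff_single_mul]
    simp [B, PowerSeries.coeff_coe, hβ, bco]
  · rw [HahnSeries.coeff_single_mul]
    have b0 : bco ε 0 = ε := by rw [bco]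
    have b1 : bco ε 1 = 0 := by rw [bco]; simp
    have b2 : bco ε 2 = 0 := by rw [bco]; simp [b1]
    have b3 : bco ε 3 = 1 / 4 := by
      rw [bco]; simp [b0, b1, b2, Fin.sum_univ_succ]; linear_combination hε / 4
    simp [B, PowerSeries.coeff_coe, hβ, b3]

/-- embedding of polynomials in t -/
noncomputable def phi : ℚ[X] →+* LL := eval₂RingHom HahnSeries.C tL

theorem phi_monomial (n : ℕ) (a : ℚ) : phi (monomial n a) = HahnSeries.single (-2 * (n : ℤ)) a := by
  rw [phi, coe_eval₂RingHom, eval₂_monomial, tL, HahnSeries.single_pow, HahnSeries.C_apply,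
    HahnSeries.single_mul_single]
  simp [mul_comm]

theorem phi_coeff (p : ℚ[X]) (j : ℕ) : (phi p).coeff (-2 * (j : ℤ)) = p.coeff j := by
  induction p using Polynomial.induction_on' with
  | add p q hp hq => rw [map_add, HahnSeries.coeff_add, hp, hq, coeff_add]
  | monomial n a =>
    rw [phi_monomial, HahnSeries.coeff_single, coeff_monomial]
    by_cases h : j = n
    · simp [h]
    · rw [if_neg (by omega), if_neg (by omega)]

theorem phi_coeff_zero (p : ℚ[X]) (k : ℤ) (hk : ∀ j : ℕ, k ≠ -2 * (j : ℤ)) :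
    (phi p).coeff k = 0 := by
  induction p using Polynomial.induction_on' with
  | add p q hp hq => simp [map_add, hp, hq]
  | monomial n a => rw [phi_monomial, HahnSeries.coeff_single, if_neg (hk n)]

theorem phi_inj : Function.Injective phi := by
  rw [injective_iff_map_eq_zero]
  intro p hp
  ext j
  rw [← phi_coeff, hp]; simp

theorem phi_order (p : ℚ[X]) (hp : p ≠ 0) : (phi p).order ≤ 0 := by
  have : (phi p).coeff (-2 * (p.natDegree : ℤ)) ≠ 0 := by
    rw [phi_coeff]; simpa using hp
  have := HahnSeries.order_le_of_coeff_ne_zero this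
  omega

theorem der_deriv : IsRingDeriv (fun p : ℚ[X] => derivative p) where
  map_add x y := by simp
  leibniz x y := by simp [derivative_mul]

theorem phi_deriv (p : ℚ[X]) : dL (phi p) = phi (derivative p) := by
  induction p using Polynomial.induction_on' with
  | add p q hp hq => simp [map_add, hp, hq, dL_deriv.map_add]
  | monomial n a =>
    rw [derivative_monomial, phi_monomial, phi_monomial]
    ext k
    rw [coeff_dL, HahnSeries.coeff_single, HahnSeries.coeff_single]
    rcases n with _ | n
    · by_cases h : k = 2
      · simp [h]
      · have : k - 2 ≠ 0 := by omega
        simp [this]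
    · by_cases h : k = -2 * (n : ℤ)
      · subst h
        rw [if_pos (by push_cast; ring), if_pos (by simp)]
        push_cast; ring
      · rw [if_neg (by push_cast; omega), if_neg (by simpa using h)]; simp

theorem coeff_nsm (n : ℕ) (x : LL) (k : ℤ) : ((n : LL) * x).coeff k = n * x.coeff k := by
  rw [← nsmul_eq_mul, HahnSeries.coeff_nsmul]; simp

/-- no nonconstant Darboux polynomials -/
theorem darboux (F g : ℚ[X][X]) (hF : F ≠ 0)
    (h : DD (fun p : ℚ[X] => derivative p) (X ^ 2 - C X) F = g * F) : F.natDegree = 0 := by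
  obtain ⟨b, rfl⟩ := cofactor der_deriv X F g hF h
  set n := F.natDegree with hn
  set G : LL[X] := F.map phi with hG
  have hG0 : G ≠ 0 := by rwa [hG, Ne, Polynomial.map_eq_zero_iff phi_inj]
  have hDG : DD dL (X ^ 2 - C tL) G = (C (n : LL) * X + C (phi b)) * G := by
    have := DD_chain der_deriv (X ^ 2 - C X) (C.comp phi) (DD_deriv dL_deriv (X ^ 2 - C tL))
      (fun r => by simp only [RingHom.comp_apply]; rw [DD_C dL_deriv, phi_deriv]) X
      (by rw [DD_X dL_deriv]; simp [phi]) F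
    rw [h] at this
    rw [hG, Polynomial.map, this]
    simp [eval₂_mul]
  obtain ⟨α, hα, hα1, hα2⟩ := exists_alpha 1 (by norm_num)
  obtain ⟨α', hα', hα'1, hα'2⟩ := exists_alpha (-1) (by norm_num)
  obtain ⟨i, H, c, hGH, hH0, hc, hDH, hdc⟩ := split_off dL_deriv tL α hα G hG0 _ _ hDG
  obtain ⟨j, H', c', hHH', hH'0, hc', hDH', hdc'⟩ := split_off dL_deriv tL α' hα' H hH0 _ _ hDH
  have e1 := (ord_lemma c _ hc hdc).1 (-1) (by norm_num)
  have e2 := (ord_lemma c' _ hc' hdc').1 (-1) (by norm_num)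
  have hb1 : (phi b).coeff (-1) = 0 := phi_coeff_zero b _ (fun j => by omega)
  have hb2 : (phi b).coeff 2 = 0 := phi_coeff_zero b _ (fun j => by omega)
  have r1 : ((n : LL) - 2 * i) * α + phi b = n * α - (2 * i : ℕ) * α + phi b := by push_cast; ring
  have r2 : ((n : LL) - i - 2 * j) * α' + (phi b - i * α) =
    n * α' - i * α' - (2 * j : ℕ) * α' + phi b - i * α := by push_cast; ring
  rw [r1] at e1
  rw [r2] at e2
  simp only [HahnSeries.coeff_add, HahnSeries.coeff_sub, coeff_nsm, hα1, hα'1, hb1] at e1 e2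
  have n1 : n = 2 * i := by
    have : (n : ℚ) = (2 * i : ℕ) := by push_cast at e1 ⊢; linarith
    exact_mod_cast this
  have n2 : n = 2 * j := by
    have : (n : ℚ) = (2 * j : ℕ) := by push_cast at e2 ⊢; linarith
    exact_mod_cast this
  have hij : i = j := by omega
  subst hij
  have hdeg : G.natDegree = n := by rw [hG, natDegree_map_eq_of_injective phi_inj]
  have hm : ∀ (a : LL) (k : ℕ), ((X - C a) ^ k).Monic := fun a k => (monic_X_sub_C a).pow k
  have hd0 : H'.natDegree = 0 := by
    rw [hGH, (hm α i).natDegree_mul' hH0, hHH', (hm α' i).natDegree_mul' hH'0] at hdeg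
    simp only [natDegree_pow, natDegree_X_sub_C] at hdeg
    omega
  have hlead : H'.leadingCoeff = phi F.leadingCoeff := by
    rw [← leadingCoeff_map_of_injective phi_inj, ← hG, hGH, hHH',
      leadingCoeff_monic_mul (hm _ _), leadingCoeff_monic_mul (hm _ _)]
  rw [eq_C_of_natDegree_eq_zero hd0, DD_C dL_deriv] at hDH'
  have hl : H'.coeff 0 = phi F.leadingCoeff := by rw [← hlead, leadingCoeff, hd0]
  rw [hl] at hDH'
  have hF' : F.leadingCoeff ≠ 0 := by simpa using hF
  have hfin : dL (phi F.leadingCoeff) = (phi b - i * α - i * α') * phi F.leadingCoeff := by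
    have hz : (n : LL) - i - i = 0 := by rw [n1]; push_cast; ring
    rw [hz] at hDH'
    simp only [map_zero, zero_mul, zero_add, ← C_mul] at hDH'
    exact C_injective hDH'
  have e3 := (ord_lemma _ _ (by rwa [Ne, map_eq_zero_iff _ phi_inj]) hfin).2
  have e4 : (((phi F.leadingCoeff).order : ℤ) : ℚ) ≤ 0 := by exact_mod_cast phi_order _ hF'
  simp only [HahnSeries.coeff_sub, coeff_nsm, hα2, hα'2, hb2] at e3
  have : (i : ℚ) ≤ 0 := by linarith
  have : i = 0 := by exact_mod_cast le_antisymm this (by positivity)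
  omega

theorem no_frac (P Q : ℚ[X][X]) (hQ : Q ≠ 0) (hPQ : IsRelPrime P Q)
    (h : DD (fun p : ℚ[X] => derivative p) (X ^ 2 - C X) P * Q
      - P * DD (fun p : ℚ[X] => derivative p) (X ^ 2 - C X) Q + 2 * X * P * Q = - Q ^ 2) : False := by
  set D := DD (fun p : ℚ[X] => derivative p) (X ^ 2 - C X) with hD
  have h1 : Q ∣ P * D Q := ⟨D P + 2 * X * P + Q, by linear_combination -h⟩
  obtain ⟨g, hg⟩ := hPQ.symm.dvd_of_dvd_mul_left h1
  rw [mul_comm] at hg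
  have hn := darboux Q g hQ hg
  obtain ⟨b, hb⟩ := cofactor der_deriv X Q g hQ hg
  rw [hn] at hb
  simp only [Nat.cast_zero, map_zero, zero_mul, zero_add] at hb
  have h2 : D P - C b * P + 2 * (X * P) = - Q := by
    apply mul_right_cancel₀ hQ
    rw [hg, hb] at h
    linear_combination h
  have hP : P ≠ 0 := by
    rintro rfl
    rw [hD, drv_zero (DD_deriv der_deriv _)] at h2
    exact hQ (by simpa using h2.symm)
  have h3 := congrArg (fun p => p.coeff (P.natDegree + 1)) h2
  simp only [coeff_add, coeff_sub, coeff_neg, hD, coeff_DD_top der_deriv X P _ le_rfl, coeff_C_mul,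
    coeff_eq_zero_of_natDegree_lt (Nat.lt_succ_self P.natDegree),
    coeff_eq_zero_of_natDegree_lt (show Q.natDegree < P.natDegree + 1 by omega),
    coeff_ofNat_mul, coeff_X_mul] at h3
  have h4 : ((P.natDegree + 2 : ℕ) : ℚ[X]) * P.leadingCoeff = 0 := by
    push_cast; rw [leadingCoeff]; linear_combination h3
  rcases mul_eq_zero.mp h4 with h5 | h5
  · have : P.natDegree + 2 = 0 := by exact_mod_cast h5
    omega
  · exact hP (leadingCoeff_eq_zero.mp h5)

theorem descend {K Kb : Type*} [Field K] [CharZero K] [Field Kb] [Algebra K Kb]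
    {δK : K → K} (hδK : IsRingDeriv δK) {δKb : Kb → Kb} (hδKb : IsRingDeriv δKb)
    (hres : ∀ c, δKb (algebraMap K Kb c) = algebraMap K Kb (δK c)) (lam : K) (u : Kb)
    (hint : IsIntegral K u)
    (hu : δKb u = -1 - 2 * algebraMap K Kb lam * u) : ∃ x : K, δK x = -1 - 2 * lam * x := by
  set f := minpoly K u with hf
  have hmon : f.Monic := minpoly.monic hint
  obtain ⟨M, hM⟩ : ∃ M, f.natDegree = M + 1 :=
    ⟨f.natDegree - 1, by have h := minpoly.natDegree_pos hint; rw [← hf] at h; omega⟩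
  have hlead : f.coeff (M + 1) = 1 := by rw [← hM]; exact hmon
  set E := DD δK (C (-2 * lam) * X - 1) f + C (2 * lam * (M + 1 : ℕ)) * f with hE
  have hXd : ∀ k, (X * derivative f).coeff k = k * f.coeff k := by
    intro k
    rcases k with _ | k
    · simp
    · rw [coeff_X_mul, coeff_derivative]; push_cast; ring
  have hcoeff : ∀ k, E.coeff k = δK (f.coeff k) - 2 * lam * (k * f.coeff k)
      - f.coeff (k + 1) * (k + 1) + 2 * lam * (M + 1 : ℕ) * f.coeff k := by
    intro k
    rw [hE, DD, coeff_add, coeff_add, coeff_mc hδK, coeff_C_mul, sub_mul, mul_assoc, one_mul,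
      coeff_sub, coeff_C_mul, hXd, coeff_derivative]
    ring
  have hE0 : E = 0 := by
    by_contra hne
    have hev : aeval u E = 0 := by
      have := DD_chain hδK (C (-2 * lam) * X - 1) (algebraMap K Kb) hδKb hres u
        (by simp [hu, map_ofNat (algebraMap K Kb) 2]; ring) f
      rw [← aeval_def, ← aeval_def, hf, minpoly.aeval, drv_zero hδKb] at this
      rw [hE, map_add, map_mul (aeval u), hf, minpoly.aeval, mul_zero, add_zero, ← this]
    have hle := natDegree_le_of_dvd (minpoly.dvd K u hev) hne
    rw [← hf, hM] at hle
    have hz : E.coeff E.natDegree = 0 := by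
      rw [hcoeff]
      have h1 : f.coeff (E.natDegree + 1) = 0 := coeff_eq_zero_of_natDegree_lt (by omega)
      rcases hle.eq_or_lt with h | h
      · rw [h1, ← h, hlead, drv_one hδK]; ring
      · rw [h1, coeff_eq_zero_of_natDegree_lt (by omega), drv_zero hδK]; ring
    exact hne (leadingCoeff_eq_zero.mp hz)
  have h0 := hcoeff M
  rw [hE0, hlead, coeff_zero] at h0
  have hN : ((M + 1 : ℕ) : K) ≠ 0 := Nat.cast_ne_zero.mpr (Nat.succ_ne_zero M)
  refine ⟨-(f.coeff M) / (M + 1 : ℕ), ?_⟩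
  set x := -(f.coeff M) / ((M + 1 : ℕ) : K) with hx
  have hx' : ((M + 1 : ℕ) : K) * x = - f.coeff M := by rw [hx]; field_simp
  have hd := congrArg δK hx'
  rw [hδK.leibniz, drv_nat hδK, drv_neg hδK] at hd
  apply mul_left_cancel₀ hN
  push_cast at *
  linear_combination hd + h0 + 2 * lam * hx'

theorem rational {K : Type*} [Field K] [Algebra (RatFunc ℚ) K]
    (δk : RatFunc ℚ → RatFunc ℚ) (hδk : IsRingDeriv δk) (hX : δk RatFunc.X = 1)
    (lam : K) (htrans : Transcendental (RatFunc ℚ) lam)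
    (hgen : IntermediateField.adjoin (RatFunc ℚ) {lam} = ⊤)
    (δK : K → K) (hδK : IsRingDeriv δK)
    (hres : ∀ c, δK (algebraMap (RatFunc ℚ) K c) = algebraMap (RatFunc ℚ) K (δk c))
    (hlam : δK lam = lam ^ 2 - algebraMap (RatFunc ℚ) K RatFunc.X)
    (x : K) (hx : δK x = -1 - 2 * lam * x) : False := by
  have hk : ∀ p : ℚ[X], δk (algebraMap ℚ[X] (RatFunc ℚ) p) =
      algebraMap ℚ[X] (RatFunc ℚ) (derivative p) := by
    have hq : ∀ q : ℚ, δk (algebraMap ℚ[X] (RatFunc ℚ) (C q)) = 0 := by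
      intro q
      have hne : ((q.den : ℕ) : RatFunc ℚ) ≠ 0 := Nat.cast_ne_zero.mpr q.den_ne_zero
      have h1 : algebraMap ℚ[X] (RatFunc ℚ) (C q) * ((q.den : ℕ) : RatFunc ℚ) = ((q.num : ℤ) : RatFunc ℚ) := by
        rw [← map_natCast (algebraMap ℚ[X] (RatFunc ℚ)), ← map_intCast (algebraMap ℚ[X] (RatFunc ℚ)),
          ← map_mul, ← map_natCast C, ← C_mul, Rat.mul_den_eq_num, map_intCast]
      have hint : δk ((q.num : ℤ) : RatFunc ℚ) = 0 := by
        obtain ⟨n, hn | hn⟩ := Int.eq_nat_or_neg q.num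
        · rw [hn, Int.cast_natCast, drv_nat hδk]
        · rw [hn, Int.cast_neg, Int.cast_natCast, drv_neg hδk, drv_nat hδk, neg_zero]
      have h2 := congrArg δk h1
      rw [hδk.leibniz, drv_nat hδk, hint, mul_zero, add_zero] at h2
      exact (mul_eq_zero.mp h2).resolve_right hne
    intro p
    induction p using Polynomial.induction_on' with
    | add p q hp hq => simp only [map_add, hδk.map_add, hp, hq]
    | monomial n a =>
      induction n with
      | zero => rw [monomial_zero_left, hq, derivative_C, map_zero]
      | succ n ih =>
        rw [← monomial_mul_X, map_mul, hδk.leibniz, ih, RatFunc.algebraMap_X, hX, derivative_mul,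
          derivative_X, map_add, map_mul, map_mul, RatFunc.algebraMap_X, map_one]
  set f : ℚ[X] →+* K := (algebraMap (RatFunc ℚ) K).comp (algebraMap ℚ[X] (RatFunc ℚ)) with hf
  have hev : ∀ p : ℚ[X][X], eval₂ f lam p = aeval lam (p.map (algebraMap ℚ[X] (RatFunc ℚ))) := by
    intro p
    rw [aeval_def, eval₂_map]
  have hinj : ∀ p : ℚ[X][X], eval₂ f lam p = 0 → p = 0 := by
    intro p hp
    rw [hev] at hp
    have := (transcendental_iff.mp htrans) _ hp
    rwa [Polynomial.map_eq_zero_iff (IsFractionRing.injective ℚ[X] (RatFunc ℚ))] at this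
  have hdiff : ∀ p : ℚ[X][X], δK (eval₂ f lam p) =
      eval₂ f lam (DD (fun p : ℚ[X] => derivative p) (X ^ 2 - C X) p) := by
    intro p
    refine DD_chain der_deriv _ f hδK (fun r => ?_) lam ?_ p
    · simp only [hf, RingHom.comp_apply]; rw [hres, hk]
    · rw [hlam]; simp [hf]
  have hx0 : x ≠ 0 := by
    rintro rfl
    rw [drv_zero hδK] at hx
    simp at hx
  obtain ⟨r, s, hrs⟩ := (IntermediateField.mem_adjoin_simple_iff (RatFunc ℚ) x).mp
    (by rw [hgen]; trivial : x ∈ IntermediateField.adjoin (RatFunc ℚ) {lam})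
  obtain ⟨b, hb, hb'⟩ := IsLocalization.integerNormalization_spec (nonZeroDivisors ℚ[X]) r
  obtain ⟨c, hc, hc'⟩ := IsLocalization.integerNormalization_spec (nonZeroDivisors ℚ[X]) s
  set r' := IsLocalization.integerNormalization (nonZeroDivisors ℚ[X]) r
  set s' := IsLocalization.integerNormalization (nonZeroDivisors ℚ[X]) s
  have hr1 : eval₂ f lam r' = f b * aeval lam r := by
    rw [hev, hb', algebra_compatible_smul (RatFunc ℚ) b r, map_smul, Algebra.smul_def]; rfl
  have hs1 : eval₂ f lam s' = f c * aeval lam s := by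
    rw [hev, hc', algebra_compatible_smul (RatFunc ℚ) c s, map_smul, Algebra.smul_def]; rfl
  have hfinj : Function.Injective f :=
    (algebraMap (RatFunc ℚ) K).injective.comp (IsFractionRing.injective ℚ[X] (RatFunc ℚ))
  have hfb : f b ≠ 0 := by
    rw [Ne, map_eq_zero_iff f hfinj]; exact nonZeroDivisors.ne_zero hb
  have hfc : f c ≠ 0 := by
    rw [Ne, map_eq_zero_iff f hfinj]; exact nonZeroDivisors.ne_zero hc
  have hs0 : aeval lam s ≠ 0 := by
    intro h; rw [h, div_zero] at hrs; exact hx0 hrs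
  have hA : x * eval₂ f lam (C b * s') = eval₂ f lam (C c * r') := by
    rw [eval₂_mul, eval₂_mul, eval₂_C, eval₂_C, hr1, hs1, hrs]
    field_simp
  have hB0 : C b * s' ≠ 0 := by
    intro h
    have : eval₂ f lam (C b * s') = 0 := by rw [h, eval₂_zero]
    rw [eval₂_mul, eval₂_C, hs1] at this
    simp [hfb, hfc, hs0] at this
  obtain ⟨P, Q, e, hrel, h1, h2⟩ :=
    UniqueFactorizationMonoid.exists_reduced_factors' (C c * r') (C b * s') hB0
  have hQ : Q ≠ 0 := by rintro rfl; exact hB0 (by rw [← h2, mul_zero])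
  have he : e ≠ 0 := by rintro rfl; exact hB0 (by rw [← h2, zero_mul])
  have hxQ : x * eval₂ f lam Q = eval₂ f lam P := by
    rw [← h1, ← h2, eval₂_mul, eval₂_mul] at hA
    exact mul_left_cancel₀ (fun h => he (hinj e h)) (by linear_combination hA)
  apply no_frac P Q hQ hrel
  rw [← sub_eq_zero]
  apply hinj
  have hdx := congrArg δK hxQ
  rw [hδK.leibniz, hx, hdiff, hdiff] at hdx
  simp only [eval₂_sub, eval₂_add, eval₂_mul, eval₂_neg, eval₂_pow, eval₂_X, eval₂_ofNat, ← hxQ, ← hdx]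
  ring

end Airy

/-- Let `k = ℚ(t)` with `t′ = 1` and let `K = k(λ)` with `λ`
transcendental over `k` and `λ′ = λ² − t`. Then `λ` is the unique solution of
`X′ = X² − t` in the algebraic closure of `K`. -/
theorem stmt_10
    (δk : RatFunc ℚ → RatFunc ℚ) (hδk : IsRingDeriv δk) (hX : δk RatFunc.X = 1)
    (K : Type*) [Field K] [Algebra (RatFunc ℚ) K]
    (lam : K) (htrans : Transcendental (RatFunc ℚ) lam)
    (hgen : IntermediateField.adjoin (RatFunc ℚ) {lam} = ⊤)
    (δK : K → K) (hδK : IsRingDeriv δK) (hres : RestrictsTo δk δK)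
    (hlam : δK lam = lam ^ 2 - algebraMap (RatFunc ℚ) K RatFunc.X)
    (Kb : Type*) [Field Kb] [Algebra K Kb] [IsAlgClosure K Kb]
    (δKb : Kb → Kb) (hδKb : IsRingDeriv δKb) (hresKb : RestrictsTo δK δKb)
    (σ : Kb)
    (hσ : δKb σ = σ ^ 2 - algebraMap K Kb (algebraMap (RatFunc ℚ) K RatFunc.X)) :
    σ = algebraMap K Kb lam := by
  have : CharZero K := charZero_of_injective_algebraMap (algebraMap (RatFunc ℚ) K).injective
  by_contra hne
  set l := algebraMap K Kb lam with hl
  have hw : σ - l ≠ 0 := sub_ne_zero.mpr hne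
  have hδl : δKb l = l ^ 2 - algebraMap K Kb (algebraMap (RatFunc ℚ) K RatFunc.X) := by
    rw [hl, hresKb, hlam, map_sub, map_pow]
  have hu : δKb (σ - l)⁻¹ = -1 - 2 * l * (σ - l)⁻¹ := by
    have h1 := congrArg δKb (inv_mul_cancel₀ hw)
    rw [hδKb.leibniz, Airy.drv_one hδKb, Airy.drv_sub hδKb, hσ, hδl] at h1
    apply mul_right_cancel₀ hw
    have h2 := inv_mul_cancel₀ hw
    linear_combination h1 - (σ - l) * h2 + (σ - l - (σ + l) + 2 * l) * h2
  have halg : Algebra.IsAlgebraic K Kb := IsAlgClosure.isAlgebraic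
  obtain ⟨x, hx⟩ := Airy.descend hδK hδKb hresKb lam (σ - l)⁻¹
    (halg.isAlgebraic _).isIntegral hu
  exact Airy.rational δk hδk hX lam htrans hgen δK hδK hres hlam x hx
end
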